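/- The scheme nCT: ∀x(¬P(x) → ∃y Q'(x,y)) → ∃z ∀x (¬P(x) → ∃y (G(z,x,y) & Q'(x,y))), where P and Q' are predicate variables and G(z,x,y) is the arithmetical Σ-formula expressing {z}(x) = y, is absolutely realizable. -/

import Mathlib

set_option linter.unusedVariables false

namespace Cpc

/-! ### Recursion-theoretic preliminaries -/

/-- Kleene application `{e}(a)`: the unary partial recursive function with Gödel number `e`,
applied to `a`. -/
def K (e a : ℕ) : Part ℕ := Nat.Partrec.Code.eval (Denumerable.ofNat Nat.Partrec.Code e) a

/-- `(e)ᵢ`: the exponent of the `i`-th prime in the prime factorization of `e`. -/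
noncomputable def pexp (i e : ℕ) : ℕ := Nat.factorization e (Nat.nth Nat.Prime i)

/-! ### The Cantor pairing function and the enumeration `g` of finitely supported functions -/

/-- The Cantor pairing `c(x,y) = (x+y)(x+y+1)/2 + x`. -/
def cpair (x y : ℕ) : ℕ := (x + y) * (x + y + 1) / 2 + x

/-- Simultaneous computation of the two inverse projections of the Cantor pairing. -/
def lrAux : ℕ → ℕ × ℕ
  | 0 => (0, 0)
  | n + 1 =>
    let p := lrAux n
    if p.2 = 0 then (0, p.1 + 1) else (p.1 + 1, p.2 - 1)

/-- The first projection `l` of the Cantor pairing. -/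
def cl (n : ℕ) : ℕ := (lrAux n).1

/-- The second projection `r` of the Cantor pairing. -/
def cr (n : ℕ) : ℕ := (lrAux n).2

/-- `l*(x,y)`: `l*(x,0) = x`, `l*(x,y+1) = l(l*(x,y))`. -/
def lstar (x : ℕ) : ℕ → ℕ
  | 0 => x
  | y + 1 => cl (lstar x y)

/-- `g(x,y) = r(l*(x,y))`: the enumeration of all finitely supported functions `ℕ → ℕ`. -/
def g (x y : ℕ) : ℕ := cr (lstar x y)

/-- `h(x,y,0) = c(l(x),y)`, `h(x,y,z+1) = c(h(l(x),y,z), r(x))`. -/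
def h : ℕ → ℕ → ℕ → ℕ
  | x, y, 0 => cpair (cl x) y
  | x, y, z + 1 => cpair (h (cl x) y z) (cr x)


/-! ### The predicate language `L*` -/

/-- Individual terms of the language `L*`: individual variables (named by natural numbers)
and individual constants for all natural numbers. -/
inductive PTerm : Type
  | var (v : ℕ)
  | const (c : ℕ)
  deriving DecidableEq

/-- Evaluation of a term under a valuation of the individual variables. -/
def PTerm.eval (ρ : ℕ → ℕ) : PTerm → ℕ
  | var v => ρ v
  | const c => c

/-- The (free) variables of a term. -/
def PTerm.fv : PTerm → Finset ℕ
  | var v => {v}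
  | const _ => ∅

/-- Formulas of the predicate language `L*`: `⊥`, atomic formulas `Pⁿᵢ(t₁,…,tₙ)`
(where the predicate variable `Pⁿᵢ` is recorded by its index `i`; its arity `n` is the
length of the argument list), and the connectives and quantifiers. -/
inductive PFml : Type
  | bot
  | atom (i : ℕ) (args : List PTerm)
  | and (φ ψ : PFml)
  | or (φ ψ : PFml)
  | imp (φ ψ : PFml)
  | all (x : ℕ) (φ : PFml)
  | ex (x : ℕ) (φ : PFml)

/-- `¬Φ` abbreviates `Φ → ⊥`. -/
def PFml.not (φ : PFml) : PFml := φ.imp .bot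

/-- `Φ ↔ Ψ` abbreviates `(Φ → Ψ) & (Ψ → Φ)`. -/
def PFml.iff (φ ψ : PFml) : PFml := (φ.imp ψ).and (ψ.imp φ)

/-- Conjunction of a list of formulas. -/
def bigAnd (l : List PFml) : PFml := l.foldr PFml.and (PFml.bot.imp PFml.bot)

/-- The free variables of a formula. -/
def PFml.fv : PFml → Finset ℕ
  | bot => ∅
  | atom _ args => args.foldr (fun t s => t.fv ∪ s) ∅
  | and φ ψ => φ.fv ∪ ψ.fv
  | or φ ψ => φ.fv ∪ ψ.fv
  | imp φ ψ => φ.fv ∪ ψ.fv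
  | all x φ => φ.fv.erase x
  | ex x φ => φ.fv.erase x

/-- The bound variables of a formula. -/
def PFml.bv : PFml → Finset ℕ
  | bot => ∅
  | atom _ _ => ∅
  | and φ ψ => φ.bv ∪ ψ.bv
  | or φ ψ => φ.bv ∪ ψ.bv
  | imp φ ψ => φ.bv ∪ ψ.bv
  | all x φ => insert x φ.bv
  | ex x φ => insert x φ.bv

/-- A formula is closed if it has no free variables. -/
def PFml.Closed (φ : PFml) : Prop := φ.fv = ∅

/-- Simultaneous substitution of terms for variables in a term. -/
def PTerm.msub (s : ℕ → PTerm) : PTerm → PTerm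
  | var v => s v
  | const c => const c

/-- Simultaneous (naive, i.e. non-capture-avoiding) substitution of terms for the free
occurrences of variables in a formula. -/
def PFml.msub (s : ℕ → PTerm) : PFml → PFml
  | bot => bot
  | atom i args => atom i (args.map (PTerm.msub s))
  | and φ ψ => (φ.msub s).and (ψ.msub s)
  | or φ ψ => (φ.msub s).or (ψ.msub s)
  | imp φ ψ => (φ.msub s).imp (ψ.msub s)
  | all x φ => all x (φ.msub fun v => if v = x then .var x else s v)
  | ex x φ => ex x (φ.msub fun v => if v = x then .var x else s v)

/-- The substitution replacing the single variable `x` by the term `t`. -/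
def sub1 (x : ℕ) (t : PTerm) : ℕ → PTerm := fun v => if v = x then t else .var v

/-- The simultaneous substitution `s` is free for (admissible in) the formula, i.e. no
variable of a substituted term gets captured by a quantifier. -/
def PFml.FreeForM (s : ℕ → PTerm) : PFml → Prop
  | bot => True
  | atom _ _ => True
  | and φ ψ => φ.FreeForM s ∧ ψ.FreeForM s
  | or φ ψ => φ.FreeForM s ∧ ψ.FreeForM s
  | imp φ ψ => φ.FreeForM s ∧ ψ.FreeForM s
  | all x φ => (∀ v ∈ φ.fv, v ≠ x → x ∉ (s v).fv) ∧
      φ.FreeForM (fun v => if v = x then .var x else s v)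
  | ex x φ => (∀ v ∈ φ.fv, v ≠ x → x ∉ (s v).fv) ∧
      φ.FreeForM (fun v => if v = x then .var x else s v)

/-! ### Interpretations and realizability -/

/-- An `n`-ary generalized predicate. -/
def GenPred (n : ℕ) : Type := (Fin n → ℕ) → Set ℕ

/-- An interpretation assigns to each predicate variable `Pⁿᵢ` an `n`-ary generalized
predicate. -/
def Interp : Type := (n : ℕ) → ℕ → GenPred n

/-- The realizability relation `e rᶠ Φ` (relative to a valuation `ρ` of the individual
variables). -/
def Realizes (f : Interp) : (ℕ → ℕ) → ℕ → PFml → Prop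
  | _, _, .bot => False
  | ρ, e, .atom i args => e ∈ f args.length i (fun j => (args.get j).eval ρ)
  | ρ, e, .and φ ψ => Realizes f ρ (pexp 0 e) φ ∧ Realizes f ρ (pexp 1 e) ψ
  | ρ, e, .or φ ψ => (pexp 0 e = 0 ∧ Realizes f ρ (pexp 1 e) φ) ∨
      (pexp 0 e = 1 ∧ Realizes f ρ (pexp 1 e) ψ)
  | ρ, e, .imp φ ψ => ∀ a, Realizes f ρ a φ → ∃ b ∈ K e a, Realizes f ρ b ψ
  | ρ, e, .all x φ => ∀ a, ∃ b ∈ K e a, Realizes f (Function.update ρ x a) b φ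
  | ρ, e, .ex x φ => Realizes f (Function.update ρ x (pexp 0 e)) (pexp 1 e) φ

/-- The zero valuation, used for closed formulas. -/
def rho0 : ℕ → ℕ := fun _ => 0

/-- The closed formula `Φ` is realizable in the interpretation `f`. -/
def FRealizable (f : Interp) (φ : PFml) : Prop := ∃ e, Realizes f rho0 e φ

/-- The closed predicate formula `Φ` is (uniformly) absolutely realizable. -/
def AbsRealizable (φ : PFml) : Prop := ∃ e, ∀ f : Interp, Realizes f rho0 e φ


/-! ### The arithmetical fragment: `Z,E,S,A,M` are the predicate variables
`P¹₀, P²₀, P²₁, P³₀, P³₁`. -/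

/-- `Z(t)`, i.e. the atomic formula `P¹₀(t)`. -/
def vZ (t : PTerm) : PFml := .atom 0 [t]
/-- `E(t,u)`, i.e. `P²₀(t,u)`. -/
def vE (t u : PTerm) : PFml := .atom 0 [t, u]
/-- `S(t,u)`, i.e. `P²₁(t,u)`. -/
def vS (t u : PTerm) : PFml := .atom 1 [t, u]
/-- `A(t,u,w)`, i.e. `P³₀(t,u,w)`. -/
def vA (t u w : PTerm) : PFml := .atom 0 [t, u, w]
/-- `M(t,u,w)`, i.e. `P³₁(t,u,w)`. -/
def vM (t u w : PTerm) : PFml := .atom 1 [t, u, w]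

/-- The standard reading of the arithmetical predicate symbols. -/
def arithStd : (n : ℕ) → ℕ → (Fin n → ℕ) → Prop
  | 1, 0, v => v 0 = 0
  | 2, 0, v => v 0 = v 1
  | 2, 1, v => v 0 + 1 = v 1
  | 3, 0, v => v 0 + v 1 = v 2
  | 3, 1, v => v 0 * v 1 = v 2
  | _, _, _ => False

/-- The standard interpretation: an atomic arithmetical statement is realized by `e`
iff `e = 0` and the statement is true. -/
def stdInterp : Interp := fun n i v => {e | e = 0 ∧ arithStd n i v}

/-- Classical truth of an arithmetical formula in the standard model (atoms of
non-arithmetical predicate variables are read as false). -/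
def TrueStd : (ℕ → ℕ) → PFml → Prop
  | _, .bot => False
  | ρ, .atom i args => arithStd args.length i (fun j => (args.get j).eval ρ)
  | ρ, .and φ ψ => TrueStd ρ φ ∧ TrueStd ρ ψ
  | ρ, .or φ ψ => TrueStd ρ φ ∨ TrueStd ρ ψ
  | ρ, .imp φ ψ => TrueStd ρ φ → TrueStd ρ ψ
  | ρ, .all x φ => ∀ a, TrueStd (Function.update ρ x a) φ
  | ρ, .ex x φ => ∃ a, TrueStd (Function.update ρ x a) φ

/-- The pairs (arity, index) naming the arithmetical predicate symbols `Z,E,S,A,M`. -/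
def arithSlot (n i : ℕ) : Prop := (n = 1 ∧ i = 0) ∨ (n = 2 ∧ i ≤ 1) ∨ (n = 3 ∧ i ≤ 1)

/-- The `Ar`-formula `x ≤ t`, i.e. `∃z A(z,x,t)`. -/
def leF (z x : ℕ) (t : PTerm) : PFml := .ex z (vA (.var z) (.var x) t)

/-- `Δ₀`-formulas of the language `Ar`. -/
inductive IsDelta0 : PFml → Prop
  | bot : IsDelta0 .bot
  | atom {i : ℕ} {args : List PTerm} : arithSlot args.length i → IsDelta0 (.atom i args)
  | and {φ ψ} : IsDelta0 φ → IsDelta0 ψ → IsDelta0 (φ.and ψ)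
  | or {φ ψ} : IsDelta0 φ → IsDelta0 ψ → IsDelta0 (φ.or ψ)
  | imp {φ ψ} : IsDelta0 φ → IsDelta0 ψ → IsDelta0 (φ.imp ψ)
  | ball {x z : ℕ} {t : PTerm} {φ} : x ∉ t.fv → z ∉ t.fv → z ≠ x → IsDelta0 φ →
      IsDelta0 (.all x ((leF z x t).imp φ))
  | bex {x z : ℕ} {t : PTerm} {φ} : x ∉ t.fv → z ∉ t.fv → z ≠ x → IsDelta0 φ →
      IsDelta0 (.ex x ((leF z x t).and φ))

/-- `Σ`-formulas of the language `Ar`. -/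
inductive IsSigma : PFml → Prop
  | delta0 {φ} : IsDelta0 φ → IsSigma φ
  | and {φ ψ} : IsSigma φ → IsSigma ψ → IsSigma (φ.and ψ)
  | or {φ ψ} : IsSigma φ → IsSigma ψ → IsSigma (φ.or ψ)
  | ball {x z : ℕ} {t : PTerm} {φ} : x ∉ t.fv → z ∉ t.fv → z ≠ x → IsSigma φ →
      IsSigma (.all x ((leF z x t).imp φ))
  | bex {x z : ℕ} {t : PTerm} {φ} : x ∉ t.fv → z ∉ t.fv → z ≠ x → IsSigma φ →
      IsSigma (.ex x ((leF z x t).and φ))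
  | ex {x : ℕ} {φ} : IsSigma φ → IsSigma (.ex x φ)




/-- Iterated universal quantification. -/
def alls (xs : List ℕ) (φ : PFml) : PFml := xs.foldr PFml.all φ

open PTerm (var const) in
/-- The axioms `A₁ – A₂₅` of the predicate version `IRA*` of intuitionistic Robinson
arithmetic. -/
def IRAstarAxioms : List PFml := [
  alls [0,1,2] (((vS (var 0) (var 2)).and (vS (var 1) (var 2))).imp (vE (var 0) (var 1))),
  alls [0,1] ((vS (var 0) (var 1)).imp (vZ (var 1)).not),
  alls [0,1,2] (((vE (var 0) (var 1)).and (vE (var 0) (var 2))).imp (vE (var 1) (var 2))),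
  alls [0,1,2] (((vE (var 0) (var 1)).and (vS (var 0) (var 2))).imp (vS (var 1) (var 2))),
  alls [0,1] ((vZ (var 1)).imp (vA (var 0) (var 1) (var 0))),
  alls [0,1,2,3,4] ((((vS (var 1) (var 2)).and (vA (var 0) (var 1) (var 3))).and
      (vS (var 3) (var 4))).imp (vA (var 0) (var 2) (var 4))),
  alls [0,1] ((vZ (var 1)).imp (vM (var 0) (var 1) (var 1))),
  alls [0,1,2,3,4] ((((vS (var 1) (var 2)).and (vM (var 0) (var 1) (var 3))).and
      (vA (var 3) (var 0) (var 4))).imp (vM (var 0) (var 2) (var 4))),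
  alls [0,1,2,3] (((vE (var 0) (var 1)).and (vA (var 0) (var 2) (var 3))).imp
      (vA (var 1) (var 2) (var 3))),
  alls [0,1,2,3] (((vE (var 1) (var 2)).and (vA (var 0) (var 1) (var 3))).imp
      (vA (var 0) (var 2) (var 3))),
  alls [0,1,2,3] (((vE (var 0) (var 1)).and (vM (var 0) (var 2) (var 3))).imp
      (vM (var 1) (var 2) (var 3))),
  alls [0,1,2,3] (((vE (var 1) (var 2)).and (vM (var 0) (var 1) (var 3))).imp
      (vM (var 0) (var 2) (var 3))),
  PFml.all 0 ((vZ (var 0)).or (.ex 1 (vS (var 1) (var 0)))),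
  PFml.ex 0 (vZ (var 0)),
  alls [0,1] (((vZ (var 0)).and (vZ (var 1))).imp (vE (var 0) (var 1))),
  alls [0,1] (((vE (var 0) (var 1)).and (vZ (var 0))).imp (vZ (var 1))),
  PFml.all 0 (.ex 1 (vS (var 0) (var 1))),
  alls [0,1,2] (((vS (var 0) (var 1)).and (vS (var 0) (var 2))).imp (vE (var 1) (var 2))),
  alls [0,1,2] (((vS (var 0) (var 1)).and (vE (var 1) (var 2))).imp (vS (var 0) (var 2))),
  alls [0,1] (.ex 2 (vA (var 0) (var 1) (var 2))),
  alls [0,1,2,3] (((vA (var 0) (var 1) (var 2)).and (vA (var 0) (var 1) (var 3))).imp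
      (vE (var 2) (var 3))),
  alls [0,1,2,3] (((vA (var 0) (var 1) (var 2)).and (vE (var 2) (var 3))).imp
      (vA (var 0) (var 1) (var 3))),
  alls [0,1] (.ex 2 (vM (var 0) (var 1) (var 2))),
  alls [0,1,2,3] (((vM (var 0) (var 1) (var 2)).and (vM (var 0) (var 1) (var 3))).imp
      (vE (var 2) (var 3))),
  alls [0,1,2,3] (((vM (var 0) (var 1) (var 2)).and (vE (var 2) (var 3))).imp
      (vM (var 0) (var 1) (var 3)))]

/-- `A₂₆`: functionality of the formula `G`:
`∀x,y,z₁,z₂ (G(x,y,z₁) & G(x,y,z₂) → E(z₁,z₂))`. Here `G = G(x,y,z)` has distinguished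
free variables `0,1,2` playing the role of `x,y,z`. -/
def A26 (G : PFml) : PFml :=
  alls [0,1,2,3] ((G.and (G.msub (sub1 2 (.var 3)))).imp (vE (.var 2) (.var 3)))

/-- `H(y,x)`, i.e. `∃w(Z(w) & G(y,x,w))`, expressing `{y}(x) = 0`; here `y,x` are the
variables `1,0` and `w` is the fresh variable `5`. -/
def Hfml (G : PFml) : PFml :=
  .ex 5 ((vZ (.var 5)).and (G.msub fun v =>
    if v = 0 then .var 1 else if v = 1 then .var 0 else if v = 2 then .var 5 else .var v))

/-- `B(v,x)` with `v,x` the variables `4,0`; here `B = B(v,x)` has distinguished free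
variables `0,1` playing the role of `v,x`. -/
def B40 (B : PFml) : PFml :=
  B.msub fun v => if v = 0 then .var 4 else if v = 1 then .var 0 else .var v

/-- `A₂₇`: `∀y,z ¬¬∃v ∀x (x ≤ z → (B(v,x) ↔ H(y,x)))`. -/
def A27 (G B : PFml) : PFml :=
  alls [1,2] (PFml.not (PFml.not (.ex 4 (.all 0
    ((leF 6 0 (.var 2)).imp ((B40 B).iff (Hfml G)))))))

/-- `A₂₈`: `∀x,y (B(x,y) ∨ ¬B(x,y))`. -/
def A28 (B : PFml) : PFml := alls [0,1] (B.or B.not)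

/-- `Q`: the conjunction of the formulas `A₁ – A₂₈`. -/
def Qfml (G B : PFml) : PFml := bigAnd (IRAstarAxioms ++ [A26 G, A27 G B, A28 B])

/-- The formula `[n](t)`: `[0](t) = Z(t)`, `[n+1](t) = ∃xₙ([n](xₙ) & S(xₙ,t))`. -/
def numFt : ℕ → PTerm → PFml
  | 0, t => vZ t
  | n + 1, t => .ex n ((numFt n (.var n)).and (vS (.var n) t))



/-- The axiom of equality for the predicate variable `Pⁿᵢ`:
`∀x⃗ ∀y⃗ (E(x₁,y₁) & … & E(xₙ,yₙ) → (P(x⃗) → P(y⃗)))`. -/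
def eqAx (n i : ℕ) : PFml :=
  alls ((List.range n) ++ (List.range n).map (· + n))
    ((bigAnd ((List.range n).map fun j => vE (.var j) (.var (n + j)))).imp
      ((PFml.atom i ((List.range n).map PTerm.var)).imp
        (PFml.atom i ((List.range n).map fun j => PTerm.var (n + j)))))




/-- Schemes over the arithmetical language: formulas of the language `LS*`, whose
atoms are either arithmetical atoms built from the predicate symbols `Z,E,S,A,M` of
`Ar`, or atoms built from the predicate variables `Pⁿᵢ`. -/
inductive Scheme : Type
  | bot
  | sZ (t : PTerm)
  | sE (t u : PTerm)
  | sS (t u : PTerm)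
  | sA (t u w : PTerm)
  | sM (t u w : PTerm)
  | patom (i : ℕ) (args : List PTerm)
  | and (φ ψ : Scheme)
  | or (φ ψ : Scheme)
  | imp (φ ψ : Scheme)
  | all (x : ℕ) (φ : Scheme)
  | ex (x : ℕ) (φ : Scheme)

def Scheme.not (φ : Scheme) : Scheme := φ.imp .bot
def Scheme.iff (φ ψ : Scheme) : Scheme := (φ.imp ψ).and (ψ.imp φ)

def Scheme.fv : Scheme → Finset ℕ
  | bot => ∅
  | sZ t => t.fv
  | sE t u => t.fv ∪ u.fv
  | sS t u => t.fv ∪ u.fv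
  | sA t u w => t.fv ∪ u.fv ∪ w.fv
  | sM t u w => t.fv ∪ u.fv ∪ w.fv
  | patom _ args => args.foldr (fun t s => t.fv ∪ s) ∅
  | and φ ψ => φ.fv ∪ ψ.fv
  | or φ ψ => φ.fv ∪ ψ.fv
  | imp φ ψ => φ.fv ∪ ψ.fv
  | all x φ => φ.fv.erase x
  | ex x φ => φ.fv.erase x

/-- All individual variables occurring in a scheme (free or bound). -/
def Scheme.vars : Scheme → Finset ℕ
  | bot => ∅
  | sZ t => t.fv
  | sE t u => t.fv ∪ u.fv
  | sS t u => t.fv ∪ u.fv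
  | sA t u w => t.fv ∪ u.fv ∪ w.fv
  | sM t u w => t.fv ∪ u.fv ∪ w.fv
  | patom _ args => args.foldr (fun t s => t.fv ∪ s) ∅
  | and φ ψ => φ.vars ∪ ψ.vars
  | or φ ψ => φ.vars ∪ ψ.vars
  | imp φ ψ => φ.vars ∪ ψ.vars
  | all x φ => insert x φ.vars
  | ex x φ => insert x φ.vars

def Scheme.bv : Scheme → Finset ℕ
  | and φ ψ => φ.bv ∪ ψ.bv
  | or φ ψ => φ.bv ∪ ψ.bv
  | imp φ ψ => φ.bv ∪ ψ.bv
  | all x φ => insert x φ.bv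
  | ex x φ => insert x φ.bv
  | _ => ∅

def Scheme.Closed (φ : Scheme) : Prop := φ.fv = ∅

/-- The predicate variables (arity, index) occurring in a scheme. -/
def Scheme.pvars : Scheme → Finset (ℕ × ℕ)
  | patom i args => {(args.length, i)}
  | and φ ψ => φ.pvars ∪ ψ.pvars
  | or φ ψ => φ.pvars ∪ ψ.pvars
  | imp φ ψ => φ.pvars ∪ ψ.pvars
  | all _ φ => φ.pvars
  | ex _ φ => φ.pvars
  | _ => ∅

def Scheme.msub (s : ℕ → PTerm) : Scheme → Scheme
  | bot => bot
  | sZ t => sZ (t.msub s)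
  | sE t u => sE (t.msub s) (u.msub s)
  | sS t u => sS (t.msub s) (u.msub s)
  | sA t u w => sA (t.msub s) (u.msub s) (w.msub s)
  | sM t u w => sM (t.msub s) (u.msub s) (w.msub s)
  | patom i args => patom i (args.map (PTerm.msub s))
  | and φ ψ => (φ.msub s).and (ψ.msub s)
  | or φ ψ => (φ.msub s).or (ψ.msub s)
  | imp φ ψ => (φ.msub s).imp (ψ.msub s)
  | all x φ => all x (φ.msub fun v => if v = x then .var x else s v)
  | ex x φ => ex x (φ.msub fun v => if v = x then .var x else s v)

def Scheme.FreeForM (s : ℕ → PTerm) : Scheme → Prop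
  | and φ ψ => φ.FreeForM s ∧ ψ.FreeForM s
  | or φ ψ => φ.FreeForM s ∧ ψ.FreeForM s
  | imp φ ψ => φ.FreeForM s ∧ ψ.FreeForM s
  | all x φ => (∀ v ∈ φ.fv, v ≠ x → x ∉ (s v).fv) ∧
      φ.FreeForM (fun v => if v = x then .var x else s v)
  | ex x φ => (∀ v ∈ φ.fv, v ≠ x → x ∉ (s v).fv) ∧
      φ.FreeForM (fun v => if v = x then .var x else s v)
  | _ => True

/-- Realizability of schemes: arithmetical atoms are realized by `e` iff `e = 0` and the
atom is true in the standard model; atoms of predicate variables are interpreted by `f`. -/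
def SReal (f : Interp) : (ℕ → ℕ) → ℕ → Scheme → Prop
  | _, _, .bot => False
  | ρ, e, .sZ t => e = 0 ∧ t.eval ρ = 0
  | ρ, e, .sE t u => e = 0 ∧ t.eval ρ = u.eval ρ
  | ρ, e, .sS t u => e = 0 ∧ t.eval ρ + 1 = u.eval ρ
  | ρ, e, .sA t u w => e = 0 ∧ t.eval ρ + u.eval ρ = w.eval ρ
  | ρ, e, .sM t u w => e = 0 ∧ t.eval ρ * u.eval ρ = w.eval ρ
  | ρ, e, .patom i args => e ∈ f args.length i (fun j => (args.get j).eval ρ)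
  | ρ, e, .and φ ψ => SReal f ρ (pexp 0 e) φ ∧ SReal f ρ (pexp 1 e) ψ
  | ρ, e, .or φ ψ => (pexp 0 e = 0 ∧ SReal f ρ (pexp 1 e) φ) ∨
      (pexp 0 e = 1 ∧ SReal f ρ (pexp 1 e) ψ)
  | ρ, e, .imp φ ψ => ∀ a, SReal f ρ a φ → ∃ b ∈ K e a, SReal f ρ b ψ
  | ρ, e, .all x φ => ∀ a, ∃ b ∈ K e a, SReal f (Function.update ρ x a) b φ
  | ρ, e, .ex x φ => SReal f (Function.update ρ x (pexp 0 e)) (pexp 1 e) φ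

/-- A closed scheme is uniformly absolutely realizable if a single `e` realizes it in
every interpretation. -/
def AbsRealizableS (φ : Scheme) : Prop := ∃ e, ∀ f : Interp, SReal f rho0 e φ

/-- Classical truth of a scheme with no predicate variables (arithmetical formula)
in the standard model. -/
def STrue : (ℕ → ℕ) → Scheme → Prop
  | _, .bot => False
  | ρ, .sZ t => t.eval ρ = 0
  | ρ, .sE t u => t.eval ρ = u.eval ρ
  | ρ, .sS t u => t.eval ρ + 1 = u.eval ρ
  | ρ, .sA t u w => t.eval ρ + u.eval ρ = w.eval ρ
  | ρ, .sM t u w => t.eval ρ * u.eval ρ = w.eval ρ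
  | _, .patom _ _ => False
  | ρ, .and φ ψ => STrue ρ φ ∧ STrue ρ ψ
  | ρ, .or φ ψ => STrue ρ φ ∨ STrue ρ ψ
  | ρ, .imp φ ψ => STrue ρ φ → STrue ρ ψ
  | ρ, .all x φ => ∀ a, STrue (Function.update ρ x a) φ
  | ρ, .ex x φ => ∃ a, STrue (Function.update ρ x a) φ

/-- `x ≤ t` in the scheme language: `∃z A(z,x,t)`. -/
def leS (z x : ℕ) (t : PTerm) : Scheme := .ex z (.sA (.var z) (.var x) t)

/-- `Δ₀`-formulas of `Ar` (as schemes). -/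
inductive IsDelta0S : Scheme → Prop
  | bot : IsDelta0S .bot
  | sZ (t) : IsDelta0S (.sZ t)
  | sE (t u) : IsDelta0S (.sE t u)
  | sS (t u) : IsDelta0S (.sS t u)
  | sA (t u w) : IsDelta0S (.sA t u w)
  | sM (t u w) : IsDelta0S (.sM t u w)
  | and {φ ψ} : IsDelta0S φ → IsDelta0S ψ → IsDelta0S (φ.and ψ)
  | or {φ ψ} : IsDelta0S φ → IsDelta0S ψ → IsDelta0S (φ.or ψ)
  | imp {φ ψ} : IsDelta0S φ → IsDelta0S ψ → IsDelta0S (φ.imp ψ)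
  | ball {x z : ℕ} {t : PTerm} {φ} : x ∉ t.fv → z ∉ t.fv → z ≠ x → IsDelta0S φ →
      IsDelta0S (.all x ((leS z x t).imp φ))
  | bex {x z : ℕ} {t : PTerm} {φ} : x ∉ t.fv → z ∉ t.fv → z ≠ x → IsDelta0S φ →
      IsDelta0S (.ex x ((leS z x t).and φ))

/-- `Σ`-formulas of `Ar` (as schemes). -/
inductive IsSigmaS : Scheme → Prop
  | delta0 {φ} : IsDelta0S φ → IsSigmaS φ
  | and {φ ψ} : IsSigmaS φ → IsSigmaS ψ → IsSigmaS (φ.and ψ)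
  | or {φ ψ} : IsSigmaS φ → IsSigmaS ψ → IsSigmaS (φ.or ψ)
  | ball {x z : ℕ} {t : PTerm} {φ} : x ∉ t.fv → z ∉ t.fv → z ≠ x → IsSigmaS φ →
      IsSigmaS (.all x ((leS z x t).imp φ))
  | bex {x z : ℕ} {t : PTerm} {φ} : x ∉ t.fv → z ∉ t.fv → z ≠ x → IsSigmaS φ →
      IsSigmaS (.ex x ((leS z x t).and φ))
  | ex {x : ℕ} {φ} : IsSigmaS φ → IsSigmaS (.ex x φ)

/-- `Φ[c]`: replace each atom `Pⁿᵢ(t₁,…,tₙ)` of a predicate variable by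
`Pⁿ⁺¹ᵢ(c,t₁,…,tₙ)` (arithmetical atoms are unchanged). -/
def Scheme.bracketC (c : ℕ) : Scheme → Scheme
  | patom i args => patom i (.const c :: args)
  | and φ ψ => (φ.bracketC c).and (ψ.bracketC c)
  | or φ ψ => (φ.bracketC c).or (ψ.bracketC c)
  | imp φ ψ => (φ.bracketC c).imp (ψ.bracketC c)
  | all x φ => all x (φ.bracketC c)
  | ex x φ => ex x (φ.bracketC c)
  | φ => φ

/-- `Φ[z]` for a variable `z`: replace each atom `Pⁿᵢ(t₁,…,tₙ)` of a predicate variable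
by `Pⁿ⁺¹ᵢ(z,t₁,…,tₙ)`. -/
def Scheme.bracketV (z : ℕ) : Scheme → Scheme
  | patom i args => patom i (.var z :: args)
  | and φ ψ => (φ.bracketV z).and (ψ.bracketV z)
  | or φ ψ => (φ.bracketV z).or (ψ.bracketV z)
  | imp φ ψ => (φ.bracketV z).imp (ψ.bracketV z)
  | all x φ => all x (φ.bracketV z)
  | ex x φ => ex x (φ.bracketV z)
  | φ => φ

/-- The interpretation `f_c`: `f_c(Pⁿᵢ)(k₁,…,kₙ) = f(Pⁿ⁺¹ᵢ)(c,k₁,…,kₙ)`. -/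
def interpCons (c : ℕ) (f : Interp) : Interp := fun n i v => f (n + 1) i (Fin.cons c v)

/-- Does the predicate variable `Pⁿᵢ` occur in the scheme? -/
def Scheme.occursP (n i : ℕ) : Scheme → Prop
  | patom j args => j = i ∧ args.length = n
  | and φ ψ => φ.occursP n i ∨ ψ.occursP n i
  | or φ ψ => φ.occursP n i ∨ ψ.occursP n i
  | imp φ ψ => φ.occursP n i ∨ ψ.occursP n i
  | all _ φ => φ.occursP n i
  | ex _ φ => φ.occursP n i
  | _ => False

/-- The substitution of the terms `args` for the distinguished variables `x₁,…,xₙ`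
(named `0,…,n-1`). -/
def argSub (args : List PTerm) : ℕ → PTerm :=
  fun v => if h : v < args.length then args.get ⟨v, h⟩ else .var v

/-- Substitution of schemes for predicate variables: each atom `Pⁿᵢ(t₁,…,tₙ)` is
replaced by the result of simultaneously substituting `t₁,…,tₙ` for the distinguished
variables `0,…,n-1` of the scheme `σ n i`. -/
def Scheme.substP (σ : ℕ → ℕ → Scheme) : Scheme → Scheme
  | patom i args => (σ args.length i).msub (argSub args)
  | and φ ψ => (φ.substP σ).and (ψ.substP σ)
  | or φ ψ => (φ.substP σ).or (ψ.substP σ)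
  | imp φ ψ => (φ.substP σ).imp (ψ.substP σ)
  | all x φ => all x (φ.substP σ)
  | ex x φ => ex x (φ.substP σ)
  | φ => φ

/-- The list of schemes `σ` is acceptable for substitution in the given scheme:
(1) at every atom of a predicate variable the substitution of the argument terms
for the distinguished variables is capture-free, and (2) no atom of a predicate
variable lies in the scope of a quantifier binding a "superfluous" parameter of the
scheme substituted for that variable. -/
def Scheme.Acceptable (σ : ℕ → ℕ → Scheme) : Scheme → Prop
  | patom i args => (σ args.length i).FreeForM (argSub args)
  | and φ ψ => φ.Acceptable σ ∧ ψ.Acceptable σ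
  | or φ ψ => φ.Acceptable σ ∧ ψ.Acceptable σ
  | imp φ ψ => φ.Acceptable σ ∧ ψ.Acceptable σ
  | all x φ => (∀ n i, φ.occursP n i → x ∉ (σ n i).fv \ Finset.range n) ∧ φ.Acceptable σ
  | ex x φ => (∀ n i, φ.occursP n i → x ∉ (σ n i).fv \ Finset.range n) ∧ φ.Acceptable σ
  | _ => True

/-- The universal closure of a scheme. -/
def Scheme.univClosure (φ : Scheme) : Scheme :=
  (φ.fv.sort (· ≤ ·)).foldr Scheme.all φ




/-- Natural deduction for the intuitionistic predicate calculus `IQC` in the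
language `L*`. -/
inductive IQC : List PFml → PFml → Prop
  | hyp {Γ : List PFml} {φ : PFml} : φ ∈ Γ → IQC Γ φ
  | botE {Γ φ} : IQC Γ .bot → IQC Γ φ
  | andI {Γ : List PFml} {φ ψ : PFml} : IQC Γ φ → IQC Γ ψ → IQC Γ (φ.and ψ)
  | andE1 {Γ : List PFml} {φ ψ : PFml} : IQC Γ (φ.and ψ) → IQC Γ φ
  | andE2 {Γ : List PFml} {φ ψ : PFml} : IQC Γ (φ.and ψ) → IQC Γ ψ
  | orI1 {Γ : List PFml} {φ ψ : PFml} : IQC Γ φ → IQC Γ (φ.or ψ)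
  | orI2 {Γ : List PFml} {φ ψ : PFml} : IQC Γ ψ → IQC Γ (φ.or ψ)
  | orE {Γ φ ψ χ} : IQC Γ (φ.or ψ) → IQC (φ :: Γ) χ → IQC (ψ :: Γ) χ → IQC Γ χ
  | impI {Γ : List PFml} {φ ψ : PFml} : IQC (φ :: Γ) ψ → IQC Γ (φ.imp ψ)
  | impE {Γ : List PFml} {φ ψ : PFml} : IQC Γ (φ.imp ψ) → IQC Γ φ → IQC Γ ψ
  | allI {Γ x φ} : IQC Γ φ → (∀ ψ ∈ Γ, x ∉ ψ.fv) → IQC Γ (.all x φ)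
  | allE {Γ x φ} (t : PTerm) : IQC Γ (.all x φ) → φ.FreeForM (sub1 x t) →
      IQC Γ (φ.msub (sub1 x t))
  | exI {Γ x φ} (t : PTerm) : IQC Γ (φ.msub (sub1 x t)) → φ.FreeForM (sub1 x t) →
      IQC Γ (.ex x φ)
  | exE {Γ x φ χ} : IQC Γ (.ex x φ) → IQC (φ :: Γ) χ → x ∉ χ.fv →
      (∀ ψ ∈ Γ, x ∉ ψ.fv) → IQC Γ χ

/-- `Pⁿᵢ` occurs in the formula. -/
def PFml.occursP (n i : ℕ) : PFml → Prop
  | .atom j args => j = i ∧ args.length = n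
  | .and φ ψ => φ.occursP n i ∨ ψ.occursP n i
  | .or φ ψ => φ.occursP n i ∨ ψ.occursP n i
  | .imp φ ψ => φ.occursP n i ∨ ψ.occursP n i
  | .all _ φ => φ.occursP n i
  | .ex _ φ => φ.occursP n i
  | _ => False



/-- Substitution of formulas for predicate variables. -/
def PFml.substP (σ : ℕ → ℕ → PFml) : PFml → PFml
  | .atom i args => (σ args.length i).msub (argSub args)
  | .and φ ψ => (φ.substP σ).and (ψ.substP σ)
  | .or φ ψ => (φ.substP σ).or (ψ.substP σ)
  | .imp φ ψ => (φ.substP σ).imp (ψ.substP σ)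
  | .all x φ => .all x (φ.substP σ)
  | .ex x φ => .ex x (φ.substP σ)
  | .bot => .bot

def PFml.AcceptableP (σ : ℕ → ℕ → PFml) : PFml → Prop
  | .atom i args => (σ args.length i).FreeForM (argSub args)
  | .and φ ψ => φ.AcceptableP σ ∧ ψ.AcceptableP σ
  | .or φ ψ => φ.AcceptableP σ ∧ ψ.AcceptableP σ
  | .imp φ ψ => φ.AcceptableP σ ∧ ψ.AcceptableP σ
  | .all x φ => (∀ n i, φ.occursP n i → x ∉ (σ n i).fv \ Finset.range n) ∧ φ.AcceptableP σ
  | .ex x φ => (∀ n i, φ.occursP n i → x ∉ (σ n i).fv \ Finset.range n) ∧ φ.AcceptableP σ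
  | .bot => True

/-- `φ` is a substitutional instance of the predicate formula `base`. -/
def IsInstance (base φ : PFml) : Prop :=
  ∃ σ : ℕ → ℕ → PFml, base.AcceptableP σ ∧ φ = base.substP σ



inductive LATerm : Type
  | var (v : ℕ)
  | zero
  | succ (t : LATerm)
  | add (t u : LATerm)
  | mul (t u : LATerm)

def LATerm.eval (ρ : ℕ → ℕ) : LATerm → ℕ
  | var v => ρ v
  | zero => 0
  | succ t => t.eval ρ + 1
  | add t u => t.eval ρ + u.eval ρ
  | mul t u => t.eval ρ * u.eval ρ

def LATerm.fv : LATerm → Finset ℕ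
  | var v => {v}
  | zero => ∅
  | succ t => t.fv
  | add t u => t.fv ∪ u.fv
  | mul t u => t.fv ∪ u.fv

def LATerm.msub (s : ℕ → LATerm) : LATerm → LATerm
  | var v => s v
  | zero => zero
  | succ t => succ (t.msub s)
  | add t u => add (t.msub s) (u.msub s)
  | mul t u => mul (t.msub s) (u.msub s)

/-- The numeral for `n`. -/
def numeral : ℕ → LATerm
  | 0 => .zero
  | n + 1 => .succ (numeral n)

inductive LAFml : Type
  | eq (t u : LATerm)
  | and (φ ψ : LAFml)
  | or (φ ψ : LAFml)
  | imp (φ ψ : LAFml)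
  | not (φ : LAFml)
  | all (x : ℕ) (φ : LAFml)
  | ex (x : ℕ) (φ : LAFml)

def LAFml.fv : LAFml → Finset ℕ
  | eq t u => t.fv ∪ u.fv
  | and φ ψ => φ.fv ∪ ψ.fv
  | or φ ψ => φ.fv ∪ ψ.fv
  | imp φ ψ => φ.fv ∪ ψ.fv
  | not φ => φ.fv
  | all x φ => φ.fv.erase x
  | ex x φ => φ.fv.erase x

def LAFml.msub (s : ℕ → LATerm) : LAFml → LAFml
  | eq t u => eq (t.msub s) (u.msub s)
  | and φ ψ => (φ.msub s).and (ψ.msub s)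
  | or φ ψ => (φ.msub s).or (ψ.msub s)
  | imp φ ψ => (φ.msub s).imp (ψ.msub s)
  | not φ => (φ.msub s).not
  | all x φ => all x (φ.msub fun v => if v = x then .var x else s v)
  | ex x φ => ex x (φ.msub fun v => if v = x then .var x else s v)

def sub1LA (x : ℕ) (t : LATerm) : ℕ → LATerm := fun v => if v = x then t else .var v

def LAFml.FreeForM (s : ℕ → LATerm) : LAFml → Prop
  | and φ ψ => φ.FreeForM s ∧ ψ.FreeForM s
  | or φ ψ => φ.FreeForM s ∧ ψ.FreeForM s
  | imp φ ψ => φ.FreeForM s ∧ ψ.FreeForM s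
  | not φ => φ.FreeForM s
  | all x φ => (∀ v ∈ φ.fv, v ≠ x → x ∉ (s v).fv) ∧
      φ.FreeForM (fun v => if v = x then .var x else s v)
  | ex x φ => (∀ v ∈ φ.fv, v ≠ x → x ∉ (s v).fv) ∧
      φ.FreeForM (fun v => if v = x then .var x else s v)
  | _ => True

/-- Classical truth of an `LA`-formula in the standard model. -/
def LATrue : (ℕ → ℕ) → LAFml → Prop
  | ρ, .eq t u => t.eval ρ = u.eval ρ
  | ρ, .and φ ψ => LATrue ρ φ ∧ LATrue ρ ψ
  | ρ, .or φ ψ => LATrue ρ φ ∨ LATrue ρ ψ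
  | ρ, .imp φ ψ => LATrue ρ φ → LATrue ρ ψ
  | ρ, .not φ => ¬ LATrue ρ φ
  | ρ, .all x φ => ∀ a, LATrue (Function.update ρ x a) φ
  | ρ, .ex x φ => ∃ a, LATrue (Function.update ρ x a) φ


/-- Kleene's recursive realizability for `LA`-formulas. -/
def LAReal : (ℕ → ℕ) → ℕ → LAFml → Prop
  | ρ, e, .eq t u => e = 0 ∧ t.eval ρ = u.eval ρ
  | ρ, e, .and φ ψ => LAReal ρ (pexp 0 e) φ ∧ LAReal ρ (pexp 1 e) ψ
  | ρ, e, .or φ ψ => (pexp 0 e = 0 ∧ LAReal ρ (pexp 1 e) φ) ∨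
      (pexp 0 e = 1 ∧ LAReal ρ (pexp 1 e) ψ)
  | ρ, e, .imp φ ψ => ∀ a, LAReal ρ a φ → ∃ b ∈ K e a, LAReal ρ b ψ
  | ρ, _, .not φ => ∀ a, ¬ LAReal ρ a φ
  | ρ, e, .all x φ => ∀ a, ∃ b ∈ K e a, LAReal (Function.update ρ x a) b φ
  | ρ, e, .ex x φ => LAReal (Function.update ρ x (pexp 0 e)) (pexp 1 e) φ

/-- `t₁ ≤ t₂` in `LA`: `∃v (t₁ + v = t₂)`. -/
def leLA (x v : ℕ) (t : LATerm) : LAFml := .ex v (.eq (.add (.var x) (.var v)) t)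

inductive IsDelta0LA : LAFml → Prop
  | eq (t u) : IsDelta0LA (.eq t u)
  | and {φ ψ} : IsDelta0LA φ → IsDelta0LA ψ → IsDelta0LA (φ.and ψ)
  | or {φ ψ} : IsDelta0LA φ → IsDelta0LA ψ → IsDelta0LA (φ.or ψ)
  | imp {φ ψ} : IsDelta0LA φ → IsDelta0LA ψ → IsDelta0LA (φ.imp ψ)
  | not {φ} : IsDelta0LA φ → IsDelta0LA φ.not
  | ball {x v : ℕ} {t : LATerm} {φ} : x ∉ t.fv → v ∉ t.fv → v ≠ x → IsDelta0LA φ →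
      IsDelta0LA (.all x ((leLA x v t).imp φ))
  | bex {x v : ℕ} {t : LATerm} {φ} : x ∉ t.fv → v ∉ t.fv → v ≠ x → IsDelta0LA φ →
      IsDelta0LA (.ex x ((leLA x v t).and φ))

inductive IsSigmaLA : LAFml → Prop
  | delta0 {φ} : IsDelta0LA φ → IsSigmaLA φ
  | and {φ ψ} : IsSigmaLA φ → IsSigmaLA ψ → IsSigmaLA (φ.and ψ)
  | or {φ ψ} : IsSigmaLA φ → IsSigmaLA ψ → IsSigmaLA (φ.or ψ)
  | ball {x v : ℕ} {t : LATerm} {φ} : x ∉ t.fv → v ∉ t.fv → v ≠ x → IsSigmaLA φ →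
      IsSigmaLA (.all x ((leLA x v t).imp φ))
  | bex {x v : ℕ} {t : LATerm} {φ} : x ∉ t.fv → v ∉ t.fv → v ≠ x → IsSigmaLA φ →
      IsSigmaLA (.ex x ((leLA x v t).and φ))
  | ex {x : ℕ} {φ} : IsSigmaLA φ → IsSigmaLA (.ex x φ)

/-- Natural deduction over `LA` from a set `Ax` of non-logical axioms
(intuitionistic logic). -/
inductive LD (Ax : LAFml → Prop) : List LAFml → LAFml → Prop
  | ax {Γ φ} : Ax φ → LD Ax Γ φ
  | hyp {Γ φ} : φ ∈ Γ → LD Ax Γ φ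
  | andI {Γ : List LAFml} {φ ψ : LAFml} : LD Ax Γ φ → LD Ax Γ ψ → LD Ax Γ (φ.and ψ)
  | andE1 {Γ : List LAFml} {φ ψ : LAFml} : LD Ax Γ (φ.and ψ) → LD Ax Γ φ
  | andE2 {Γ : List LAFml} {φ ψ : LAFml} : LD Ax Γ (φ.and ψ) → LD Ax Γ ψ
  | orI1 {Γ : List LAFml} {φ ψ : LAFml} : LD Ax Γ φ → LD Ax Γ (φ.or ψ)
  | orI2 {Γ : List LAFml} {φ ψ : LAFml} : LD Ax Γ ψ → LD Ax Γ (φ.or ψ)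
  | orE {Γ φ ψ χ} : LD Ax Γ (φ.or ψ) → LD Ax (φ :: Γ) χ → LD Ax (ψ :: Γ) χ → LD Ax Γ χ
  | impI {Γ : List LAFml} {φ ψ : LAFml} : LD Ax (φ :: Γ) ψ → LD Ax Γ (φ.imp ψ)
  | impE {Γ : List LAFml} {φ ψ : LAFml} : LD Ax Γ (φ.imp ψ) → LD Ax Γ φ → LD Ax Γ ψ
  | notI {Γ : List LAFml} {φ ψ : LAFml} : LD Ax (φ :: Γ) ψ → LD Ax (φ :: Γ) ψ.not → LD Ax Γ φ.not
  | notE {Γ : List LAFml} {φ ψ : LAFml} : LD Ax Γ φ → LD Ax Γ φ.not → LD Ax Γ ψ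
  | allI {Γ x φ} : LD Ax Γ φ → (∀ ψ ∈ Γ, x ∉ ψ.fv) → LD Ax Γ (.all x φ)
  | allE {Γ x φ} (t : LATerm) : LD Ax Γ (.all x φ) → φ.FreeForM (sub1LA x t) →
      LD Ax Γ (φ.msub (sub1LA x t))
  | exI {Γ x φ} (t : LATerm) : LD Ax Γ (φ.msub (sub1LA x t)) → φ.FreeForM (sub1LA x t) →
      LD Ax Γ (.ex x φ)
  | exE {Γ x φ χ} : LD Ax Γ (.ex x φ) → LD Ax (φ :: Γ) χ → x ∉ χ.fv →
      (∀ ψ ∈ Γ, x ∉ ψ.fv) → LD Ax Γ χ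

open LATerm (var) in
/-- The axioms of equality and the Peano axioms for successor, sum and product
(without induction). -/
def baseAxioms : List LAFml := [
  .all 0 (.eq (var 0) (var 0)),
  .all 0 (.all 1 (.all 2 ((LAFml.eq (var 0) (var 1)).imp
    ((LAFml.eq (var 0) (var 2)).imp (.eq (var 1) (var 2)))))),
  .all 0 (.all 1 ((LAFml.eq (var 0) (var 1)).imp (.eq (.succ (var 0)) (.succ (var 1))))),
  .all 0 (.all 1 ((LAFml.eq (.succ (var 0)) (.succ (var 1))).imp (.eq (var 0) (var 1)))),
  .all 0 (LAFml.not (.eq (.succ (var 0)) .zero)),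
  .all 0 (.all 1 (.all 2 ((LAFml.eq (var 0) (var 1)).imp
    (.eq (.add (var 0) (var 2)) (.add (var 1) (var 2)))))),
  .all 0 (.all 1 (.all 2 ((LAFml.eq (var 0) (var 1)).imp
    (.eq (.add (var 2) (var 0)) (.add (var 2) (var 1)))))),
  .all 0 (.all 1 (.all 2 ((LAFml.eq (var 0) (var 1)).imp
    (.eq (.mul (var 0) (var 2)) (.mul (var 1) (var 2)))))),
  .all 0 (.all 1 (.all 2 ((LAFml.eq (var 0) (var 1)).imp
    (.eq (.mul (var 2) (var 0)) (.mul (var 2) (var 1)))))),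
  .all 0 (.eq (.add (var 0) .zero) (var 0)),
  .all 0 (.all 1 (.eq (.add (var 0) (.succ (var 1))) (.succ (.add (var 0) (var 1))))),
  .all 0 (.eq (.mul (var 0) .zero) .zero),
  .all 0 (.all 1 (.eq (.mul (var 0) (.succ (var 1)))
    (.add (.mul (var 0) (var 1)) (var 0))))]

/-- The axioms of intuitionistic Robinson arithmetic `IRA`: the Peano axioms with the
induction scheme replaced by `∀x (x = 0 ∨ ∃y (x = sy))`. -/
def IRAax (φ : LAFml) : Prop :=
  φ ∈ baseAxioms ∨
    φ = .all 0 ((LAFml.eq (.var 0) .zero).or (.ex 1 (.eq (.var 0) (.succ (.var 1)))))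

/-- An instance of the induction scheme. -/
def indInst (x : ℕ) (φ : LAFml) : LAFml :=
  ((φ.msub (sub1LA x .zero)).and
    (.all x (φ.imp (φ.msub (sub1LA x (.succ (.var x))))))).imp (.all x φ)

/-- The axioms of Heyting arithmetic `HA`. -/
def HAax (ψ : LAFml) : Prop := ψ ∈ baseAxioms ∨ ∃ x φ, ψ = indInst x φ




/-- Translation of schemes into pure predicate formulas: the arithmetical predicate
symbols `Z,E,S,A,M` become the predicate variables `P¹₀,P²₀,P²₁,P³₀,P³₁`, and the other
predicate variables are renamed injectively so as to avoid these five. -/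
def Scheme.toPFml : Scheme → PFml
  | .bot => .bot
  | .sZ t => vZ t
  | .sE t u => vE t u
  | .sS t u => vS t u
  | .sA t u w => vA t u w
  | .sM t u w => vM t u w
  | .patom i args => .atom (i + 2) args
  | .and φ ψ => φ.toPFml.and ψ.toPFml
  | .or φ ψ => φ.toPFml.or ψ.toPFml
  | .imp φ ψ => φ.toPFml.imp ψ.toPFml
  | .all x φ => .all x φ.toPFml
  | .ex x φ => .ex x φ.toPFml

/-- `Eq(E,P₁,…,Pₘ)`: the conjunction of the axioms of equality for the predicate
variables of the scheme `Φ` (as renamed by `Scheme.toPFml`). -/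
noncomputable def EqFor (Φ : Scheme) : PFml :=
  bigAnd (Φ.pvars.toList.map fun p => eqAx p.1 (p.2 + 2))

/-- `Φ*`: the pure predicate formula
`Q(Z,E,S,A,M) & Eq(E,P₁,…,Pₘ) → Φ(Z,E,S,A,M,P₁,…,Pₘ)` associated with a scheme `Φ`. -/
noncomputable def SchemeStar (G B : PFml) (Φ : Scheme) : PFml :=
  ((Qfml G B).and (EqFor Φ)).imp Φ.toPFml

/-- The Markov principle `M` as a pure predicate formula, with `P` the unary
predicate variable `P¹₁`. -/
def Mfml : PFml :=
  ((PFml.all 0 ((PFml.atom 1 [.var 0]).or (PFml.atom 1 [.var 0]).not)).and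
    (PFml.ex 0 (PFml.atom 1 [.var 0])).not.not).imp (PFml.ex 0 (PFml.atom 1 [.var 0]))

/-- `G(z,x,y)` where `z,x,y` are the variables `2,0,1` and the distinguished variables
`0,1,2` of `G` play the role of `x,y,z` in `G(x,y,z)` (expressing `{x}(y)=z`). -/
def Gzxy (G : PFml) : PFml :=
  G.msub fun v => if v = 0 then .var 2 else if v = 1 then .var 0 else
    if v = 2 then .var 1 else .var v

/-- The scheme `nCT` as a pure predicate formula: `P` is the predicate variable `P¹₁`
and `Q'` is `P²₂`. -/
def nCTfml (G : PFml) : PFml :=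
  (PFml.all 0 ((PFml.atom 1 [.var 0]).not.imp
      (PFml.ex 1 (PFml.atom 2 [.var 0, .var 1])))).imp
    (PFml.ex 2 (PFml.all 0 ((PFml.atom 1 [.var 0]).not.imp
      (PFml.ex 1 ((Gzxy G).and (PFml.atom 2 [.var 0, .var 1]))))))

/-- The pure predicate formula `nCT*`, i.e. `Q & Eq(E,P,Q') → nCT`. -/
def nCTstar (G B : PFml) : PFml :=
  ((Qfml G B).and ((eqAx 1 1).and (eqAx 2 2))).imp (nCTfml G)

/-- The calculus `MQC`: intuitionistic predicate calculus together with all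
substitutional instances of the Markov principle `M` and of the formula `nCT*`
as axioms. -/
inductive MQC (G B : PFml) : List PFml → PFml → Prop
  | axM {Γ : List PFml} {φ : PFml} : IsInstance Mfml φ → MQC G B Γ φ
  | axCT {Γ : List PFml} {φ : PFml} : IsInstance (nCTstar G B) φ → MQC G B Γ φ
  | hyp {Γ : List PFml} {φ : PFml} : φ ∈ Γ → MQC G B Γ φ
  | botE {Γ φ} : MQC G B Γ .bot → MQC G B Γ φ
  | andI {Γ : List PFml} {φ ψ : PFml} : MQC G B Γ φ → MQC G B Γ ψ → MQC G B Γ (φ.and ψ)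
  | andE1 {Γ : List PFml} {φ ψ : PFml} : MQC G B Γ (φ.and ψ) → MQC G B Γ φ
  | andE2 {Γ : List PFml} {φ ψ : PFml} : MQC G B Γ (φ.and ψ) → MQC G B Γ ψ
  | orI1 {Γ : List PFml} {φ ψ : PFml} : MQC G B Γ φ → MQC G B Γ (φ.or ψ)
  | orI2 {Γ : List PFml} {φ ψ : PFml} : MQC G B Γ ψ → MQC G B Γ (φ.or ψ)
  | orE {Γ : List PFml} {φ ψ χ : PFml} : MQC G B Γ (φ.or ψ) → MQC G B (φ :: Γ) χ →
      MQC G B (ψ :: Γ) χ → MQC G B Γ χ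
  | impI {Γ : List PFml} {φ ψ : PFml} : MQC G B (φ :: Γ) ψ → MQC G B Γ (φ.imp ψ)
  | impE {Γ : List PFml} {φ ψ : PFml} : MQC G B Γ (φ.imp ψ) → MQC G B Γ φ → MQC G B Γ ψ
  | allI {Γ x φ} : MQC G B Γ φ → (∀ ψ ∈ Γ, x ∉ ψ.fv) → MQC G B Γ (.all x φ)
  | allE {Γ x φ} (t : PTerm) : MQC G B Γ (.all x φ) → φ.FreeForM (sub1 x t) →
      MQC G B Γ (φ.msub (sub1 x t))
  | exI {Γ x φ} (t : PTerm) : MQC G B Γ (φ.msub (sub1 x t)) → φ.FreeForM (sub1 x t) →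
      MQC G B Γ (.ex x φ)
  | exE {Γ x φ χ} : MQC G B Γ (.ex x φ) → MQC G B (φ :: Γ) χ → x ∉ χ.fv →
      (∀ ψ ∈ Γ, x ∉ ψ.fv) → MQC G B Γ χ

/-- The classical predicate calculus `CQC`: intuitionistic predicate calculus together
with the law of the excluded middle. -/
inductive CQC : List PFml → PFml → Prop
  | em {Γ : List PFml} (φ : PFml) : CQC Γ (φ.or φ.not)
  | hyp {Γ : List PFml} {φ : PFml} : φ ∈ Γ → CQC Γ φ
  | botE {Γ φ} : CQC Γ .bot → CQC Γ φ
  | andI {Γ : List PFml} {φ ψ : PFml} : CQC Γ φ → CQC Γ ψ → CQC Γ (φ.and ψ)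
  | andE1 {Γ : List PFml} {φ ψ : PFml} : CQC Γ (φ.and ψ) → CQC Γ φ
  | andE2 {Γ : List PFml} {φ ψ : PFml} : CQC Γ (φ.and ψ) → CQC Γ ψ
  | orI1 {Γ : List PFml} {φ ψ : PFml} : CQC Γ φ → CQC Γ (φ.or ψ)
  | orI2 {Γ : List PFml} {φ ψ : PFml} : CQC Γ ψ → CQC Γ (φ.or ψ)
  | orE {Γ : List PFml} {φ ψ χ : PFml} : CQC Γ (φ.or ψ) → CQC (φ :: Γ) χ →
      CQC (ψ :: Γ) χ → CQC Γ χ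
  | impI {Γ : List PFml} {φ ψ : PFml} : CQC (φ :: Γ) ψ → CQC Γ (φ.imp ψ)
  | impE {Γ : List PFml} {φ ψ : PFml} : CQC Γ (φ.imp ψ) → CQC Γ φ → CQC Γ ψ
  | allI {Γ x φ} : CQC Γ φ → (∀ ψ ∈ Γ, x ∉ ψ.fv) → CQC Γ (.all x φ)
  | allE {Γ x φ} (t : PTerm) : CQC Γ (.all x φ) → φ.FreeForM (sub1 x t) →
      CQC Γ (φ.msub (sub1 x t))
  | exI {Γ x φ} (t : PTerm) : CQC Γ (φ.msub (sub1 x t)) → φ.FreeForM (sub1 x t) →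
      CQC Γ (.ex x φ)
  | exE {Γ x φ χ} : CQC Γ (.ex x φ) → CQC (φ :: Γ) χ → x ∉ χ.fv →
      (∀ ψ ∈ Γ, x ∉ ψ.fv) → CQC Γ χ

/-- Auxiliary translation for the predicate form: the formula expressing that the
`LA`-term `t` has value `v`; `k` is a supply of fresh variables, and the next unused
fresh variable is returned. -/
def LATerm.pf : LATerm → ℕ → ℕ → PFml × ℕ
  | .var u, v, k => (vE (.var u) (.var v), k)
  | .zero, v, k => (vZ (.var v), k)
  | .succ t, v, k =>
      let r := t.pf k (k + 1)
      (.ex k (r.1.and (vS (.var k) (.var v))), r.2)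
  | .add t u, v, k =>
      let r1 := t.pf k (k + 2)
      let r2 := u.pf (k + 1) r1.2
      (.ex k (.ex (k + 1) (r1.1.and (r2.1.and (vA (.var k) (.var (k + 1)) (.var v))))), r2.2)
  | .mul t u, v, k =>
      let r1 := t.pf k (k + 2)
      let r2 := u.pf (k + 1) r1.2
      (.ex k (.ex (k + 1) (r1.1.and (r2.1.and (vM (.var k) (.var (k + 1)) (.var v))))), r2.2)

/-- Auxiliary translation for the predicate form of an `LA`-formula;
`k` is a supply of fresh variables. -/
def LAFml.pf : LAFml → ℕ → PFml
  | .eq t u, k =>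
      let r1 := t.pf k (k + 2)
      let r2 := u.pf (k + 1) r1.2
      .ex k (.ex (k + 1) (r1.1.and (r2.1.and (vE (.var k) (.var (k + 1))))))
  | .and φ ψ, k => (φ.pf k).and (ψ.pf k)
  | .or φ ψ, k => (φ.pf k).or (ψ.pf k)
  | .imp φ ψ, k => (φ.pf k).imp (ψ.pf k)
  | .not φ, k => (φ.pf k).not
  | .all x φ, k => .all x (φ.pf k)
  | .ex x φ, k => .ex x (φ.pf k)

def LATerm.vmax : LATerm → ℕ
  | .var v => v + 1
  | .zero => 0
  | .succ t => t.vmax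
  | .add t u => max t.vmax u.vmax
  | .mul t u => max t.vmax u.vmax

def LAFml.vmax : LAFml → ℕ
  | .eq t u => max t.vmax u.vmax
  | .and φ ψ => max φ.vmax ψ.vmax
  | .or φ ψ => max φ.vmax ψ.vmax
  | .imp φ ψ => max φ.vmax ψ.vmax
  | .not φ => φ.vmax
  | .all x φ => max (x + 1) φ.vmax
  | .ex x φ => max (x + 1) φ.vmax

/-- The predicate form of an `LA`-formula: the result of eliminating the function
symbols `0, s, +, ·` and replacing `=` by the predicate symbol `E`. -/
def predForm (φ : LAFml) : PFml := φ.pf φ.vmax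

/-- Translation of `L*`-terms into `LA`-terms (constants become numerals). -/
def PTerm.toLA : PTerm → LATerm
  | .var v => .var v
  | .const c => numeral c

/-- Substitution of arithmetical formulas for the predicate variables of a predicate
formula: the atom `Pⁿᵢ(t₁,…,tₙ)` is replaced by the result of substituting `t₁,…,tₙ`
for the distinguished variables `0,…,n-1` of the `LA`-formula `σ n i`. -/
def PFml.toLA (σ : ℕ → ℕ → LAFml) : PFml → LAFml
  | .bot => .eq .zero (.succ .zero)
  | .atom i args => (σ args.length i).msub
      (fun v => if h : v < args.length then (args.get ⟨v, h⟩).toLA else .var v)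
  | .and φ ψ => (φ.toLA σ).and (ψ.toLA σ)
  | .or φ ψ => (φ.toLA σ).or (ψ.toLA σ)
  | .imp φ ψ => (φ.toLA σ).imp (ψ.toLA σ)
  | .all x φ => .all x (φ.toLA σ)
  | .ex x φ => .ex x (φ.toLA σ)

/-- Acceptability of the arithmetical substitution `σ` for a predicate formula. -/
def PFml.AcceptLA (σ : ℕ → ℕ → LAFml) : PFml → Prop
  | .atom i args => (σ args.length i).FreeForM
      (fun v => if h : v < args.length then (args.get ⟨v, h⟩).toLA else .var v)
  | .and φ ψ => φ.AcceptLA σ ∧ ψ.AcceptLA σ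
  | .or φ ψ => φ.AcceptLA σ ∧ ψ.AcceptLA σ
  | .imp φ ψ => φ.AcceptLA σ ∧ ψ.AcceptLA σ
  | .all x φ => (∀ n i, φ.occursP n i → x ∉ (σ n i).fv \ Finset.range n) ∧ φ.AcceptLA σ
  | .ex x φ => (∀ n i, φ.occursP n i → x ∉ (σ n i).fv \ Finset.range n) ∧ φ.AcceptLA σ
  | .bot => True

/-- The standard arithmetical reading of the predicate symbols `Z,E,S,A,M`. -/
def arithSig : ℕ → ℕ → LAFml
  | 1, 0 => .eq (.var 0) .zero
  | 2, 0 => .eq (.var 0) (.var 1)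
  | 2, 1 => .eq (.succ (.var 0)) (.var 1)
  | 3, 0 => .eq (.add (.var 0) (.var 1)) (.var 2)
  | 3, 1 => .eq (.mul (.var 0) (.var 1)) (.var 2)
  | _, _ => .eq .zero (.succ .zero)

/-- An instance of the Markov scheme `M` in the language `LA`. -/
def MinstLA (x : ℕ) (φ : LAFml) : LAFml :=
  ((LAFml.all x (φ.or φ.not)).and (LAFml.ex x φ).not.not).imp (.ex x φ)

/-- An instance of the scheme `nCT` in the language `LA` (with `x,y,e` the variables
`0,1,2`): `∀x(¬Ψ(x) → ∃y Φ(x,y)) → ∃e ∀x(¬Ψ(x) → ∃y(G(e,x,y) & Φ(x,y)))`. -/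
def nCTinstLA (GLA Ψ Φ : LAFml) : LAFml :=
  (LAFml.all 0 (Ψ.not.imp (.ex 1 Φ))).imp
    (.ex 2 (.all 0 (Ψ.not.imp (.ex 1 ((GLA.msub fun v =>
      if v = 0 then .var 2 else if v = 1 then .var 0 else
        if v = 2 then .var 1 else .var v).and Φ)))))

/-- The axioms of Markov arithmetic `MA = HA + M + nCT`. -/
def MAax (GLA : LAFml) (ψ : LAFml) : Prop :=
  HAax ψ ∨ (∃ x φ, ψ = MinstLA x φ) ∨
    (∃ Ψ Φ : LAFml, 1 ∉ Ψ.fv ∧ 2 ∉ Ψ.fv ∧ 2 ∉ Φ.fv ∧ ψ = nCTinstLA GLA Ψ Φ)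

/-- The axioms of the theory `CA`: the Peano axioms (those of `HA`) together with all
arithmetical substitutional instances of the predicate formulas `M` and `nCT*`. -/
def CAax (G B : PFml) (ψ : LAFml) : Prop :=
  HAax ψ ∨ (∃ σ, Mfml.AcceptLA σ ∧ ψ = Mfml.toLA σ) ∨
    (∃ σ, (nCTstar G B).AcceptLA σ ∧ ψ = (nCTstar G B).toLA σ)


/-- The interpretation `f` is a model of the closed formula `Φ` if `Φ` is
`f`-realizable. -/
def IsModel (f : Interp) (φ : PFml) : Prop := ∃ e, Realizes f rho0 e φ

/-- A natural number `a` is `f`-standard if the formula `[n](a)` is `f`-realizable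
for some `n`. -/
def fStandard (f : Interp) (a : ℕ) : Prop :=
  ∃ n e, Realizes f rho0 e (numFt n (.const a))

/-- The scheme `nCT` (with `P` the unary predicate variable `P¹₀` and `Q'` the binary
predicate variable `P²₀`, and `x,y,z` the variables `0,1,2`):
`∀x(¬P(x) → ∃y Q'(x,y)) → ∃z ∀x (¬P(x) → ∃y (G(z,x,y) & Q'(x,y)))`. -/
def nCTscheme (GS : Scheme) : Scheme :=
  (Scheme.all 0 ((Scheme.patom 0 [.var 0]).not.imp
      (.ex 1 (.patom 0 [.var 0, .var 1])))).imp
    (.ex 2 (.all 0 ((Scheme.patom 0 [.var 0]).not.imp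
      (.ex 1 ((GS.msub fun v => if v = 0 then .var 2 else if v = 1 then .var 0 else
          if v = 2 then .var 1 else .var v).and (.patom 0 [.var 0, .var 1]))))))

/-- The arithmetical formula `Φ(x) = ∃y (Z(y) & G(x,x,y))` (with `x,y` the
variables `0,1`), expressing `{x}(x) = 0`. -/
def PhiX (G : PFml) : PFml :=
  .ex 1 ((vZ (.var 1)).and (G.msub fun v =>
    if v = 0 then .var 0 else if v = 1 then .var 0 else
      if v = 2 then .var 1 else .var v))

/-- The predicate formula `Ψ* = (Q → Ψ)` where `Ψ = ¬∀x(¬Φ(x) ∨ Φ(x))` and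
`Φ(x) = ∃y(Z(y) & G(x,x,y))`. -/
def PsiStar (G B : PFml) : PFml :=
  (Qfml G B).imp (PFml.not (.all 0 (((PhiX G).not).or (PhiX G))))

end Cpc

namespace CpcAux

open Cpc

/-- Coded pair `2^a * 3^b`. -/
def pr (a b : ℕ) : ℕ := 2 ^ a * 3 ^ b

theorem pexp_zero_pr (a b : ℕ) : pexp 0 (pr a b) = a := by
  have h23 : (3 : ℕ).factorization 2 = 0 := Nat.factorization_eq_zero_of_not_dvd (by decide)
  simp [pexp, pr, Nat.nth_prime_zero_eq_two, Nat.factorization_mul, Nat.factorization_pow,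
    Nat.Prime.factorization_self Nat.prime_two, h23]

theorem pexp_one_pr (a b : ℕ) : pexp 1 (pr a b) = b := by
  have h23 : (2 : ℕ).factorization 3 = 0 := Nat.factorization_eq_zero_of_not_dvd (by decide)
  simp [pexp, pr, Nat.nth_prime_one_eq_three, Nat.factorization_mul, Nat.factorization_pow,
    Nat.Prime.factorization_self Nat.prime_three, h23]

theorem primrec_pow : Primrec₂ (fun a b : ℕ => a ^ b) := by
  have : Primrec₂ (fun a b : ℕ => (Nat.rec 1 (fun _ r => r * a) b : ℕ)) := by
    have h1 : Primrec (fun _ : ℕ => 1) := Primrec.const 1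
    have h2 : Primrec₂ (fun (a : ℕ) (p : ℕ × ℕ) => p.2 * a) :=
      Primrec.nat_mul.comp (Primrec.snd.comp Primrec.snd) Primrec.fst
    exact Primrec.nat_rec h1 h2
  refine this.of_eq fun a b => ?_
  induction b with
  | zero => rfl
  | succ k ih => simp only [pow_succ, ← ih]

theorem primrec_pr : Primrec₂ pr :=
  Primrec.nat_mul.comp (primrec_pow.comp (Primrec.const 2) Primrec.fst)
    (primrec_pow.comp (Primrec.const 3) Primrec.snd)

theorem primrec_fact (p : ℕ) (hp : p.Prime) : Primrec (fun e : ℕ => e.factorization p) := by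
  classical
  have hdvd : PrimrecRel (fun (e k : ℕ) => e % p ^ k = 0) :=
    Primrec.eq.comp (Primrec.nat_mod.comp Primrec.fst
      (primrec_pow.comp (Primrec.const p) Primrec.snd)) (Primrec.const 0)
  have h1 : Primrec (fun e : ℕ => Nat.findGreatest (fun k => e % p ^ k = 0) e) :=
    Primrec.nat_findGreatest Primrec.id hdvd
  refine h1.of_eq fun e => ?_
  rcases Nat.eq_zero_or_pos e with rfl | he
  · simp
  · rw [Nat.findGreatest_eq_iff]
    refine ⟨(Nat.factorization_lt p he.ne').le, fun _ => ?_, fun n hn _ => ?_⟩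
    · exact Nat.mod_eq_zero_of_dvd (Nat.ordProj_dvd e p)
    · intro h
      have := (hp.pow_dvd_iff_le_factorization he.ne').1 (Nat.dvd_of_mod_eq_zero h)
      omega

theorem primrec_pexp0 : Primrec (pexp 0) :=
  (primrec_fact 2 Nat.prime_two).of_eq fun e => by simp [pexp, Nat.nth_prime_zero_eq_two]

theorem primrec_pexp1 : Primrec (pexp 1) :=
  (primrec_fact 3 Nat.prime_three).of_eq fun e => by simp [pexp, Nat.nth_prime_one_eq_three]

theorem smn {α : Type} [Primcodable α] (F : α → ℕ →. ℕ) (hF : Partrec₂ F) :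
    ∃ c : α → ℕ, Primrec c ∧ ∀ a n, K (c a) n = F a n := by
  have h1 : Partrec (fun m : ℕ => (Part.ofOption (Encodable.decode (α := α) m.unpair.1)).bind
      fun a => F a m.unpair.2) := by
    refine Partrec.bind (Computable.ofOption
      (Computable.decode.comp (Computable.fst.comp Computable.unpair))) ?_
    exact hF.comp Computable.snd
      ((Computable.snd.comp Computable.unpair).comp Computable.fst)
  obtain ⟨c, hc⟩ := Nat.Partrec.Code.exists_code.1 (Partrec.nat_iff.1 h1)
  refine ⟨fun a => Encodable.encode (Nat.Partrec.Code.curry c (Encodable.encode a)), ?_, ?_⟩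
  · exact Primrec.encode.comp
      (Nat.Partrec.Code.primrec₂_curry.comp (Primrec.const c) Primrec.encode)
  · intro a n
    simp [K, Nat.Partrec.Code.eval_curry, hc]

theorem partrec_K : Partrec₂ K :=
  Nat.Partrec.Code.eval_part.comp ((Computable.ofNat _).comp Computable.fst) Computable.snd

theorem exists_ck : ∃ ck : ℕ → ℕ, Primrec ck ∧ ∀ b a, K (ck b) a = Part.some b :=
  smn (fun b _ => Part.some b) (Computable.fst : Computable (fun p : ℕ × ℕ => p.1))

/-- Finite environments. -/
abbrev Env := List (ℕ × ℕ)

/-- The valuation coded by an environment. -/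
def env (l : Env) (v : ℕ) : ℕ := l.foldr (fun p r => if p.1 = v then p.2 else r) 0

theorem env_cons (x a : ℕ) (l : Env) : env ((x, a) :: l) = Function.update (env l) x a := by
  funext v
  by_cases hv : v = x
  · subst hv; simp [env]
  · simp [env, Function.update_of_ne hv, Ne.symm hv]

theorem primrec_env (v : ℕ) : Primrec (fun l : Env => env l v) := by
  have h2 : Primrec₂ (fun (_ : Env) (q : (ℕ × ℕ) × ℕ) => if q.1.1 = v then q.1.2 else q.2) :=
    Primrec.ite (Primrec.eq.comp (Primrec.fst.comp (Primrec.fst.comp Primrec.snd))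
      (Primrec.const v)) (Primrec.snd.comp (Primrec.fst.comp Primrec.snd))
      (Primrec.snd.comp Primrec.snd)
  exact Primrec.list_foldr Primrec.id (Primrec.const 0) h2

theorem primrec_eval (t : PTerm) : Primrec (fun l : Env => t.eval (env l)) := by
  cases t with
  | var v => exact primrec_env v
  | const c => exact Primrec.const c

theorem eval_update (t : PTerm) (ρ : ℕ → ℕ) (x a : ℕ) (h : x ∉ t.fv) :
    t.eval (Function.update ρ x a) = t.eval ρ := by
  cases t with
  | var v =>
    simp only [PTerm.fv, Finset.mem_singleton] at h
    simp [PTerm.eval, Function.update_of_ne (Ne.symm h)]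
  | const c => rfl

theorem leS_true (ρ : ℕ → ℕ) (z x : ℕ) (t : PTerm) (a : ℕ) (hx : x ∉ t.fv) (hz : z ∉ t.fv)
    (hzx : z ≠ x) : STrue (Function.update ρ x a) (leS z x t) ↔ a ≤ t.eval ρ := by
  simp only [leS, STrue, eval_update t _ z _ hz, eval_update t _ x _ hx]
  generalize t.eval ρ = T
  simp only [PTerm.eval, Function.update_self, Function.update_of_ne (Ne.symm hzx)]
  constructor
  · rintro ⟨b, hb⟩; omega
  · intro h; exact ⟨T - a, by omega⟩

theorem leS_real (f : Interp) (ρ : ℕ → ℕ) (z x : ℕ) (t : PTerm) (a e : ℕ) (hx : x ∉ t.fv)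
    (hz : z ∉ t.fv) (hzx : z ≠ x) : SReal f (Function.update ρ x a) e (leS z x t) ↔
      pexp 1 e = 0 ∧ pexp 0 e + a = t.eval ρ := by
  simp only [leS, SReal, eval_update t _ z _ hz, eval_update t _ x _ hx]
  simp only [PTerm.eval, Function.update_self, Function.update_of_ne (Ne.symm hzx)]

theorem primrec_cons (x : ℕ) : Primrec₂ (fun (l : Env) (a : ℕ) => ((x, a) :: l : Env)) :=
  Primrec.list_cons.comp ((Primrec.const x).pair Primrec.snd) Primrec.fst

/-- Bounded universal quantification. -/
theorem pp_ball {α : Type} [Primcodable α] (R : ℕ → α → Prop) (b : α → ℕ) (hb : Primrec b)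
    (hR : PrimrecRel R) : PrimrecPred (fun a => ∀ k ≤ b a, R k a) := by
  have := hR.forall_mem_list.comp (Primrec.list_range.comp (Primrec.succ.comp hb)) Primrec.id
  exact this.of_eq fun a => by simp [Nat.lt_succ_iff]

theorem pp_bex {α : Type} [Primcodable α] (R : ℕ → α → Prop) (b : α → ℕ) (hb : Primrec b)
    (hR : PrimrecRel R) : PrimrecPred (fun a => ∃ k ≤ b a, R k a) := by
  have := hR.exists_mem_list.comp (Primrec.list_range.comp (Primrec.succ.comp hb)) Primrec.id
  exact this.of_eq fun a => by simp [Nat.lt_succ_iff]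

theorem delta0 {φ : Scheme} (hφ : IsDelta0S φ) :
    PrimrecPred (fun l : Env => STrue (env l) φ) ∧
    (∃ r : Env → ℕ, Primrec r ∧
      ∀ l, STrue (env l) φ → ∀ f, SReal f (env l) (r l) φ) ∧
    (∀ l f e, SReal f (env l) e φ → STrue (env l) φ) := by
  classical
  obtain ⟨ck, hck, hckK⟩ := exists_ck
  induction hφ with
  | bot =>
    exact ⟨(Primrec.eq.comp (Primrec.const 0) (Primrec.const 1) :
      PrimrecPred (fun _ : Env => (0 : ℕ) = 1)).of_eq (by simp [STrue]),
      ⟨fun _ => 0, Primrec.const 0, fun l h => h.elim⟩, fun l f e h => h⟩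
  | sZ t =>
    exact ⟨Primrec.eq.comp (primrec_eval t) (Primrec.const 0),
      ⟨fun _ => 0, Primrec.const 0, fun l h f => ⟨rfl, h⟩⟩, fun l f e h => h.2⟩
  | sE t u =>
    exact ⟨Primrec.eq.comp (primrec_eval t) (primrec_eval u),
      ⟨fun _ => 0, Primrec.const 0, fun l h f => ⟨rfl, h⟩⟩, fun l f e h => h.2⟩
  | sS t u =>
    exact ⟨Primrec.eq.comp (Primrec.succ.comp (primrec_eval t)) (primrec_eval u),
      ⟨fun _ => 0, Primrec.const 0, fun l h f => ⟨rfl, h⟩⟩, fun l f e h => h.2⟩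
  | sA t u w =>
    exact ⟨Primrec.eq.comp (Primrec.nat_add.comp (primrec_eval t) (primrec_eval u))
      (primrec_eval w),
      ⟨fun _ => 0, Primrec.const 0, fun l h f => ⟨rfl, h⟩⟩, fun l f e h => h.2⟩
  | sM t u w =>
    exact ⟨Primrec.eq.comp (Primrec.nat_mul.comp (primrec_eval t) (primrec_eval u))
      (primrec_eval w),
      ⟨fun _ => 0, Primrec.const 0, fun l h f => ⟨rfl, h⟩⟩, fun l f e h => h.2⟩
  | and _ _ ih1 ih2 =>
    obtain ⟨d1, ⟨r1, p1, h1⟩, s1⟩ := ih1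
    obtain ⟨d2, ⟨r2, p2, h2⟩, s2⟩ := ih2
    refine ⟨d1.and d2, ⟨fun l => pr (r1 l) (r2 l), primrec_pr.comp p1 p2, fun l h f => ?_⟩,
      fun l f e h => ⟨s1 l f _ h.1, s2 l f _ h.2⟩⟩
    simp only [SReal, pexp_zero_pr, pexp_one_pr]
    exact ⟨h1 l h.1 f, h2 l h.2 f⟩
  | @or φ ψ _ _ ih1 ih2 =>
    obtain ⟨d1, ⟨r1, p1, h1⟩, s1⟩ := ih1
    obtain ⟨d2, ⟨r2, p2, h2⟩, s2⟩ := ih2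
    refine ⟨d1.or d2, ⟨fun l => if STrue (env l) φ then pr 0 (r1 l) else pr 1 (r2 l),
      Primrec.ite d1 (primrec_pr.comp (Primrec.const 0) p1)
        (primrec_pr.comp (Primrec.const 1) p2), fun l h f => ?_⟩,
      fun l f e h => ?_⟩
    · by_cases hc : STrue (env l) φ
      · simp only [SReal, if_pos hc, pexp_zero_pr, pexp_one_pr]
        exact Or.inl ⟨trivial, h1 l hc f⟩
      · simp only [SReal, if_neg hc, pexp_zero_pr, pexp_one_pr]
        exact Or.inr ⟨trivial, h2 l (h.resolve_left hc) f⟩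
    · rcases h with h | h
      · exact Or.inl (s1 l f _ h.2)
      · exact Or.inr (s2 l f _ h.2)
  | @imp φ ψ _ _ ih1 ih2 =>
    obtain ⟨d1, ⟨r1, p1, h1⟩, s1⟩ := ih1
    obtain ⟨d2, ⟨r2, p2, h2⟩, s2⟩ := ih2
    refine ⟨(d1.not.or d2).of_eq fun l => imp_iff_not_or.symm,
      ⟨fun l => ck (r2 l), hck.comp p2, fun l h f a ha => ?_⟩, fun l f e h ht => ?_⟩
    · exact ⟨r2 l, by rw [hckK]; exact Part.mem_some _, h2 l (h (s1 l f a ha)) f⟩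
    · obtain ⟨b, _, hb⟩ := h _ (h1 l ht f)
      exact s2 l f b hb
  | @ball x z t φ hx hz hzx _ ih =>
    obtain ⟨d, ⟨r, p, hr⟩, s⟩ := ih
    have key : ∀ l, STrue (env l) (.all x ((leS z x t).imp φ)) ↔
        ∀ a ≤ t.eval (env l), STrue (env ((x, a) :: l)) φ := by
      intro l
      simp only [STrue, env_cons, leS_true _ z x t _ hx hz hzx]
    obtain ⟨c, hc, hcK⟩ := smn (fun (l : Env) (a : ℕ) => Part.some (ck (r ((x, a) :: l))))
      (hck.comp (p.comp (primrec_cons x))).to_comp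
    refine ⟨(pp_ball (fun a l => STrue (env ((x, a) :: l)) φ) _ (primrec_eval t)
      (d.comp ((primrec_cons x).comp Primrec.snd Primrec.fst))).of_eq fun l => (key l).symm,
      ⟨c, hc, fun l h f a => ⟨_, by rw [hcK]; exact Part.mem_some _, ?_⟩⟩, fun l f e h => ?_⟩
    · intro b hb
      rw [leS_real f _ z x t _ _ hx hz hzx] at hb
      refine ⟨_, by rw [hckK]; exact Part.mem_some _, ?_⟩
      rw [← env_cons]
      exact hr _ ((key l).1 h a (by omega)) f
    · rw [key]
      intro a ha
      obtain ⟨b, _, hb⟩ := h a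
      obtain ⟨w, _, hw⟩ := hb (pr (t.eval (env l) - a) 0) (by
        rw [leS_real f _ z x t _ _ hx hz hzx, pexp_zero_pr, pexp_one_pr]; omega)
      rw [← env_cons] at hw
      exact s _ f w hw
  | @bex x z t φ hx hz hzx _ ih =>
    obtain ⟨d, ⟨r, p, hr⟩, s⟩ := ih
    have key : ∀ l, STrue (env l) (.ex x ((leS z x t).and φ)) ↔
        ∃ a ≤ t.eval (env l), STrue (env ((x, a) :: l)) φ := by
      intro l
      simp only [STrue, env_cons, leS_true _ z x t _ hx hz hzx]
    have hg : Primrec (fun l : Env =>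
        Nat.findGreatest (fun a => STrue (env ((x, a) :: l)) φ) (t.eval (env l))) :=
      Primrec.nat_findGreatest (primrec_eval t) (d.comp (primrec_cons x))
    generalize hgd : (fun l : Env =>
        Nat.findGreatest (fun a => STrue (env ((x, a) :: l)) φ) (t.eval (env l))) = g at hg
    refine ⟨(pp_bex (fun a l => STrue (env ((x, a) :: l)) φ) _ (primrec_eval t)
      (d.comp ((primrec_cons x).comp Primrec.snd Primrec.fst))).of_eq fun l => (key l).symm,
      ⟨fun l => pr (g l) (pr (pr (t.eval (env l) - g l) 0) (r ((x, g l) :: l))),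
        primrec_pr.comp hg (primrec_pr.comp (primrec_pr.comp
          (Primrec.nat_sub.comp (primrec_eval t) hg) (Primrec.const 0))
          (p.comp ((primrec_cons x).comp Primrec.id hg))), fun l h f => ?_⟩, fun l f e h => ?_⟩
    · obtain ⟨a, ha, hat⟩ := (key l).1 h
      have h1 : g l ≤ t.eval (env l) := by rw [← hgd]; exact Nat.findGreatest_le _
      have h2 : STrue (env ((x, g l) :: l)) φ := by
        rw [← hgd]
        exact Nat.findGreatest_spec (P := fun a => STrue (env ((x, a) :: l)) φ) ha hat
      simp only [SReal, pexp_zero_pr, pexp_one_pr]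
      rw [leS_real f _ z x t _ _ hx hz hzx, pexp_zero_pr, pexp_one_pr, ← env_cons]
      exact ⟨⟨rfl, by omega⟩, hr _ h2 f⟩
    · rw [key]
      simp only [SReal] at h
      rw [leS_real f _ z x t _ _ hx hz hzx, ← env_cons] at h
      exact ⟨pexp 0 e, by omega, s _ f _ h.2⟩

/-- The property proved of all `Σ`-formulas. -/
def Good (φ : Scheme) : Prop :=
  ∃ (R : ℕ → Env → Prop) (r : ℕ → Env → ℕ), PrimrecRel R ∧ Primrec₂ r ∧
    (∀ n m l, n ≤ m → R n l → R m l) ∧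
    (∀ l, STrue (env l) φ → ∃ n, R n l) ∧
    (∀ n l, R n l → ∀ f, SReal f (env l) (r n l) φ)

theorem good_delta0 {φ : Scheme} (hφ : IsDelta0S φ) : Good φ := by
  obtain ⟨d, ⟨r, p, hr⟩, _⟩ := delta0 hφ
  exact ⟨fun _ l => STrue (env l) φ, fun _ l => r l, d.comp Primrec.snd, p.comp Primrec.snd,
    fun n m l _ h => h, fun l h => ⟨0, h⟩, fun n l h f => hr l h f⟩

theorem good_and {φ ψ : Scheme} (h1 : Good φ) (h2 : Good ψ) : Good (φ.and ψ) := by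
  obtain ⟨R1, r1, d1, p1, m1, t1, s1⟩ := h1
  obtain ⟨R2, r2, d2, p2, m2, t2, s2⟩ := h2
  refine ⟨fun n l => R1 n l ∧ R2 n l, fun n l => pr (r1 n l) (r2 n l), PrimrecPred.and d1 d2,
    primrec_pr.comp p1 p2, fun n m l hnm h => ⟨m1 n m l hnm h.1, m2 n m l hnm h.2⟩,
    fun l h => ?_, fun n l h f => ?_⟩
  · obtain ⟨n1, hn1⟩ := t1 l h.1
    obtain ⟨n2, hn2⟩ := t2 l h.2
    exact ⟨max n1 n2, m1 _ _ l (le_max_left _ _) hn1, m2 _ _ l (le_max_right _ _) hn2⟩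
  · simp only [SReal, pexp_zero_pr, pexp_one_pr]
    exact ⟨s1 n l h.1 f, s2 n l h.2 f⟩

theorem good_or {φ ψ : Scheme} (h1 : Good φ) (h2 : Good ψ) : Good (φ.or ψ) := by
  classical
  obtain ⟨R1, r1, d1, p1, m1, t1, s1⟩ := h1
  obtain ⟨R2, r2, d2, p2, m2, t2, s2⟩ := h2
  refine ⟨fun n l => R1 n l ∨ R2 n l,
    fun n l => if R1 n l then pr 0 (r1 n l) else pr 1 (r2 n l), PrimrecPred.or d1 d2,
    Primrec.ite d1 (primrec_pr.comp (Primrec.const 0) p1)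
        (primrec_pr.comp (Primrec.const 1) p2),
    fun n m l hnm h => h.imp (m1 n m l hnm) (m2 n m l hnm),
    fun l h => ?_, fun n l h f => ?_⟩
  · rcases h with h | h
    · exact (t1 l h).imp fun n hn => Or.inl hn
    · exact (t2 l h).imp fun n hn => Or.inr hn
  · by_cases hc : R1 n l
    · simp only [SReal, if_pos hc, pexp_zero_pr, pexp_one_pr]
      exact Or.inl ⟨trivial, s1 n l hc f⟩
    · simp only [SReal, if_neg hc, pexp_zero_pr, pexp_one_pr]
      exact Or.inr ⟨trivial, s2 n l (h.resolve_left hc) f⟩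

theorem good_ex {φ : Scheme} (x : ℕ) (h1 : Good φ) : Good (.ex x φ) := by
  classical
  obtain ⟨R, r, d, p, m, t, s⟩ := h1
  have hcons : Primrec₂ (fun (q : ℕ × Env) (a : ℕ) => ((x, a) :: q.2 : Env)) :=
    (primrec_cons x).comp (Primrec.snd.comp Primrec.fst) Primrec.snd
  have hd : PrimrecRel (fun (q : ℕ × Env) (a : ℕ) => R q.1 ((x, a) :: q.2)) :=
    d.comp (Primrec.fst.comp Primrec.fst) hcons
  have hg : Primrec (fun q : ℕ × Env =>
      Nat.findGreatest (fun a => R q.1 ((x, a) :: q.2)) q.1) :=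
    Primrec.nat_findGreatest Primrec.fst hd
  generalize hgd : (fun q : ℕ × Env =>
      Nat.findGreatest (fun a => R q.1 ((x, a) :: q.2)) q.1) = g at hg
  refine ⟨fun n l => ∃ a ≤ n, R n ((x, a) :: l),
    fun n l => pr (g (n, l)) (r n ((x, g (n, l)) :: l)), ?_, ?_, ?_, ?_, ?_⟩
  · exact pp_bex (fun a (q : ℕ × Env) => R q.1 ((x, a) :: q.2)) Prod.fst Primrec.fst
      (PrimrecPred.comp hd (Primrec.snd.pair Primrec.fst))
  · exact primrec_pr.comp hg (p.comp Primrec.fst (hcons.comp Primrec.id hg))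
  · rintro n k l hnk ⟨a, ha, h⟩
    exact ⟨a, ha.trans hnk, m _ _ _ hnk h⟩
  · rintro l ⟨a, ha⟩
    rw [← env_cons] at ha
    obtain ⟨n, hn⟩ := t _ ha
    exact ⟨max n a, a, le_max_right _ _, m _ _ _ (le_max_left _ _) hn⟩
  · rintro n l ⟨a, ha, h⟩ f
    have h2 : R n ((x, g (n, l)) :: l) := by
      rw [← hgd]
      exact Nat.findGreatest_spec (P := fun a => R n ((x, a) :: l)) ha h
    simp only [SReal, pexp_zero_pr, pexp_one_pr]
    rw [← env_cons]
    exact s _ _ h2 f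

theorem good_ball {x z : ℕ} {t : PTerm} {φ : Scheme} (hx : x ∉ t.fv) (hz : z ∉ t.fv)
    (hzx : z ≠ x) (h1 : Good φ) : Good (.all x ((leS z x t).imp φ)) := by
  classical
  obtain ⟨ck, hck, hckK⟩ := exists_ck
  obtain ⟨R, r, d, p, m, tr, s⟩ := h1
  have hcons : Primrec₂ (fun (q : ℕ × Env) (a : ℕ) => ((x, a) :: q.2 : Env)) :=
    (primrec_cons x).comp (Primrec.snd.comp Primrec.fst) Primrec.snd
  have hd : PrimrecRel (fun (q : ℕ × Env) (a : ℕ) => R q.1 ((x, a) :: q.2)) :=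
    d.comp (Primrec.fst.comp Primrec.fst) hcons
  obtain ⟨c, hc, hcK⟩ := smn
    (fun (q : ℕ × Env) (a : ℕ) => Part.some (ck (r q.1 ((x, a) :: q.2))))
    (hck.comp (p.comp (Primrec.fst.comp Primrec.fst) hcons)).to_comp
  refine ⟨fun n l => ∀ a ≤ t.eval (env l), R n ((x, a) :: l), fun n l => c (n, l),
    ?_, hc, ?_, ?_, ?_⟩
  · exact pp_ball (fun a (q : ℕ × Env) => R q.1 ((x, a) :: q.2)) (fun q => t.eval (env q.2))
      ((primrec_eval t).comp Primrec.snd)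
      (PrimrecPred.comp hd (Primrec.snd.pair Primrec.fst))
  · exact fun n k l hnk h a ha => m _ _ _ hnk (h a ha)
  · intro l h
    have h' : ∀ a ≤ t.eval (env l), ∃ n, R n ((x, a) :: l) := by
      intro a ha
      apply tr
      rw [env_cons]
      exact h a ((leS_true _ z x t _ hx hz hzx).2 ha)
    have h'' : ∀ b, b ≤ t.eval (env l) → ∃ n, ∀ a ≤ b, R n ((x, a) :: l) := by
      intro b
      induction b with
      | zero =>
        intro hb
        obtain ⟨n, hn⟩ := h' 0 hb
        exact ⟨n, fun a ha => by rwa [Nat.le_zero.1 ha]⟩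
      | succ k ih =>
        intro hb
        obtain ⟨n, hn⟩ := h' _ hb
        obtain ⟨n', hn'⟩ := ih (by omega)
        refine ⟨max n n', fun a ha => ?_⟩
        rcases Nat.lt_or_ge k a with hk | hk
        · obtain rfl : a = k + 1 := by omega
          exact m _ _ _ (le_max_left _ _) hn
        · exact m _ _ _ (le_max_right _ _) (hn' a hk)
    exact h'' _ le_rfl
  · intro n l h f a
    refine ⟨_, by rw [hcK]; exact Part.mem_some _, fun b hb => ?_⟩
    rw [leS_real f _ z x t _ _ hx hz hzx] at hb
    refine ⟨_, by rw [hckK]; exact Part.mem_some _, ?_⟩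
    rw [← env_cons]
    exact s _ _ (h a (by omega)) f

theorem good_sigma {φ : Scheme} (hφ : IsSigmaS φ) : Good φ := by
  induction hφ with
  | delta0 h => exact good_delta0 h
  | and _ _ h1 h2 => exact good_and h1 h2
  | or _ _ h1 h2 => exact good_or h1 h2
  | ball hx hz hzx _ h => exact good_ball hx hz hzx h
  | bex hx hz hzx _ h =>
    exact good_ex _ (good_and (good_ex _ (good_delta0 (.sA _ _ _))) h)
  | ex _ h => exact good_ex _ h

theorem eval_msub (s : ℕ → PTerm) (ρ : ℕ → ℕ) (t : PTerm) :
    (t.msub s).eval ρ = t.eval (fun v => (s v).eval ρ) := by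
  cases t <;> rfl

theorem msub_env (s : ℕ → PTerm) (ρ : ℕ → ℕ) (x a : ℕ) (hs : ∀ v, v ≠ x → x ∉ (s v).fv) :
    (fun v => ((if v = x then PTerm.var x else s v)).eval (Function.update ρ x a)) =
      Function.update (fun v => (s v).eval ρ) x a := by
  funext v
  by_cases hv : v = x
  · subst hv; simp [PTerm.eval]
  · simp [hv, eval_update _ _ _ _ (hs v hv)]

theorem real_msub (f : Interp) (φ : Scheme) : ∀ (s : ℕ → PTerm) (ρ : ℕ → ℕ) (e : ℕ),
    φ.pvars = ∅ → (∀ x ∈ φ.bv, ∀ v, v ≠ x → x ∉ (s v).fv) →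
    (SReal f ρ e (φ.msub s) ↔ SReal f (fun v => (s v).eval ρ) e φ) := by
  have hup : ∀ (s : ℕ → PTerm) (x : ℕ) (B : Finset ℕ),
      (∀ y ∈ B, ∀ v, v ≠ y → y ∉ (s v).fv) →
      (∀ y ∈ B, ∀ v, v ≠ y → y ∉ (if v = x then PTerm.var x else s v).fv) := by
    intro s x B h y hy v hv
    by_cases hvx : v = x
    · subst hvx; simpa [PTerm.fv] using hv.symm
    · simpa [hvx] using h y hy v hv
  induction φ with
  | bot => intros; rfl
  | sZ t => intros; simp only [Scheme.msub, SReal, eval_msub]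
  | sE t u => intros; simp only [Scheme.msub, SReal, eval_msub]
  | sS t u => intros; simp only [Scheme.msub, SReal, eval_msub]
  | sA t u w => intros; simp only [Scheme.msub, SReal, eval_msub]
  | sM t u w => intros; simp only [Scheme.msub, SReal, eval_msub]
  | patom i args => intro s ρ e h; simp [Scheme.pvars] at h
  | and φ ψ ih1 ih2 =>
    intro s ρ e hp hb
    simp only [Scheme.pvars, Finset.union_eq_empty] at hp
    simp only [Scheme.bv, Finset.mem_union] at hb
    simp only [Scheme.msub, SReal, ih1 s ρ _ hp.1 fun x hx => hb x (Or.inl hx),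
      ih2 s ρ _ hp.2 fun x hx => hb x (Or.inr hx)]
  | or φ ψ ih1 ih2 =>
    intro s ρ e hp hb
    simp only [Scheme.pvars, Finset.union_eq_empty] at hp
    simp only [Scheme.bv, Finset.mem_union] at hb
    simp only [Scheme.msub, SReal, ih1 s ρ _ hp.1 fun x hx => hb x (Or.inl hx),
      ih2 s ρ _ hp.2 fun x hx => hb x (Or.inr hx)]
  | imp φ ψ ih1 ih2 =>
    intro s ρ e hp hb
    simp only [Scheme.pvars, Finset.union_eq_empty] at hp
    simp only [Scheme.bv, Finset.mem_union] at hb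
    simp only [Scheme.msub, SReal, ih1 s ρ _ hp.1 fun x hx => hb x (Or.inl hx),
      ih2 s ρ _ hp.2 fun x hx => hb x (Or.inr hx)]
  | all x φ ih =>
    intro s ρ e hp hb
    simp only [Scheme.bv, Finset.mem_insert, forall_eq_or_imp] at hb
    simp only [Scheme.msub, SReal]
    refine forall_congr' fun a => exists_congr fun b => and_congr Iff.rfl ?_
    rw [ih _ _ _ hp (hup s x _ hb.2), msub_env s ρ x a hb.1]
  | ex x φ ih =>
    intro s ρ e hp hb
    simp only [Scheme.bv, Finset.mem_insert, forall_eq_or_imp] at hb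
    simp only [Scheme.msub, SReal]
    rw [ih _ _ _ hp (hup s x _ hb.2), msub_env s ρ x _ hb.1]

/-- The environment in which `G(z,x,y)` is evaluated. -/
def env3 (z x y : ℕ) : Env := [(0, z), (1, x), (2, y)]

theorem primrec_env3 {α : Type} [Primcodable α] {z x y : α → ℕ} (hz : Primrec z)
    (hx : Primrec x) (hy : Primrec y) : Primrec (fun a => env3 (z a) (x a) (y a)) :=
  Primrec.list_cons.comp ((Primrec.const 0).pair hz)
    (Primrec.list_cons.comp ((Primrec.const 1).pair hx)
      (Primrec.list_cons.comp ((Primrec.const 2).pair hy) (Primrec.const [])))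

theorem sub_env3 (z x y : ℕ) :
    (fun v => (if v = 0 then PTerm.var 2 else if v = 1 then .var 0 else
          if v = 2 then .var 1 else .var v).eval
      (Function.update (Function.update (Function.update rho0 2 z) 0 x) 1 y)) =
      env (env3 z x y) := by
  funext v
  rcases v with _ | _ | _ | v <;> simp [env, env3, PTerm.eval, Function.update, rho0]

theorem G_realizer (GS : Scheme) (hG : IsSigmaS GS) :
    ∃ w : ℕ × ℕ × ℕ →. ℕ, Partrec w ∧ ∀ z x y, STrue (env (env3 z x y)) GS →
      ∃ b ∈ w (z, x, y), ∀ f, SReal f (env (env3 z x y)) b GS := by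
  classical
  obtain ⟨R, r, d, p, m, t, s⟩ := good_sigma hG
  have he : Primrec (fun q : ℕ × ℕ × ℕ => env3 q.1 q.2.1 q.2.2) :=
    primrec_env3 Primrec.fst (Primrec.fst.comp Primrec.snd) (Primrec.snd.comp Primrec.snd)
  have hd : Primrec₂ (fun (q : ℕ × ℕ × ℕ) (n : ℕ) => decide (R n (env3 q.1 q.2.1 q.2.2))) :=
    (d.comp Primrec.snd (he.comp Primrec.fst)).decide
  have hf : Partrec (fun q : ℕ × ℕ × ℕ =>
      Nat.rfind fun n => (Part.some (decide (R n (env3 q.1 q.2.1 q.2.2))) : Part Bool)) :=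
    Partrec.rfind hd.to_comp
  have hr : Computable₂ (fun (q : ℕ × ℕ × ℕ) (n : ℕ) => r n (env3 q.1 q.2.1 q.2.2)) :=
    (p.comp Primrec.snd (he.comp Primrec.fst)).to_comp
  refine ⟨_, hf.map hr, fun z x y h => ?_⟩
  obtain ⟨n, hn⟩ := t _ h
  have hdom : (Nat.rfind fun n =>
      (Part.some (decide (R n (env3 z x y))) : Part Bool)).Dom := by
    exact Nat.rfind_dom.2 ⟨n, by simpa using hn, fun _ => trivial⟩
  have hmem := Part.get_mem hdom
  have hspec := Nat.rfind_spec hmem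
  refine ⟨_, Part.mem_map _ hmem, fun f => s _ _ ?_ f⟩
  simpa using hspec

theorem main (GS : Scheme) (hGbv : ∀ v ∈ GS.bv, 10 ≤ v) (hGsig : IsSigmaS GS)
    (hGar : GS.pvars = ∅)
    (hGdef : ∀ ρ : ℕ → ℕ, STrue ρ GS ↔ K (ρ 0) (ρ 1) = Part.some (ρ 2)) :
    ∃ e, ∀ f : Interp, SReal f rho0 e (nCTscheme GS) := by
  obtain ⟨w, hw, hwG⟩ := G_realizer GS hGsig
  -- `q a x = {{a}(x)}(0)`
  have hq : Partrec₂ (fun a x : ℕ => (K a x).bind fun b => K b 0) :=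
    Partrec.bind partrec_K (partrec_K.comp Computable.snd (Computable.const 0))
  obtain ⟨zc, hzc, hzcK⟩ := smn (fun a x : ℕ => ((K a x).bind fun b => K b 0).map (pexp 0))
    (hq.map (primrec_pexp0.to_comp.comp Computable.snd).to₂)
  have hin : Partrec₂ (fun (q : ℕ × ℕ) (_ : ℕ) =>
      ((K q.1 q.2).bind fun b => K b 0).bind fun v =>
        (w (zc q.1, q.2, pexp 0 v)).map fun u => pr (pexp 0 v) (pr u (pexp 1 v))) := by
    refine Partrec.bind (hq.comp (Computable.fst.comp Computable.fst)
      (Computable.snd.comp Computable.fst)) ?_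
    refine Partrec.map (hw.comp ?_) ?_
    · exact ((hzc.comp (Primrec.fst.comp (Primrec.fst.comp Primrec.fst))).pair
        ((Primrec.snd.comp (Primrec.fst.comp Primrec.fst)).pair
          (primrec_pexp0.comp Primrec.snd))).to_comp
    · exact (primrec_pr.comp (primrec_pexp0.comp (Primrec.snd.comp Primrec.fst))
        (primrec_pr.comp Primrec.snd
          (primrec_pexp1.comp (Primrec.snd.comp Primrec.fst)))).to_comp
  obtain ⟨c2, hc2, hc2K⟩ := smn _ hin
  obtain ⟨c1, hc1, hc1K⟩ := smn (fun a x : ℕ => Part.some (c2 (a, x))) hc2.to_comp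
  obtain ⟨c0, -, hc0K⟩ := smn (fun (_ : ℕ) (a : ℕ) => Part.some (pr (zc a) (c1 a)))
    ((primrec_pr.comp hzc hc1).comp Primrec.snd).to_comp
  refine ⟨c0 0, fun f a ha => ⟨_, by rw [hc0K]; exact Part.mem_some _, ?_⟩⟩
  simp only [SReal, pexp_zero_pr, pexp_one_pr]
  intro x
  refine ⟨_, by rw [hc1K]; exact Part.mem_some _, fun c hc => ?_⟩
  simp only [Scheme.not, SReal] at ha hc
  obtain ⟨b, hb, hbr⟩ := ha x
  obtain ⟨v, hv, hvr⟩ := hbr 0 (fun d hd => by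
    obtain ⟨_, _, hF⟩ := hc d (by simpa [PTerm.eval] using hd)
    exact hF.elim)
  have hqv : ((K a x).bind fun b => K b 0) = Part.some v := by
    rw [Part.eq_some_iff.2 hb, Part.bind_some]; exact Part.eq_some_iff.2 hv
  have htrue : STrue (env (env3 (zc a) x (pexp 0 v))) GS := by
    rw [hGdef]
    have h0 : env (env3 (zc a) x (pexp 0 v)) 0 = zc a := by simp [env, env3]
    have h1 : env (env3 (zc a) x (pexp 0 v)) 1 = x := by simp [env, env3]
    have h2 : env (env3 (zc a) x (pexp 0 v)) 2 = pexp 0 v := by simp [env, env3]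
    rw [h0, h1, h2, hzcK, hqv, Part.map_some]
  obtain ⟨u, hu, hur⟩ := hwG _ _ _ htrue
  refine ⟨pr (pexp 0 v) (pr u (pexp 1 v)), ?_, ?_⟩
  · rw [hc2K]
    simp only [hqv, Part.bind_some]
    exact Part.mem_map _ hu
  · simp only [pexp_zero_pr, pexp_one_pr]
    refine ⟨?_, ?_⟩
    · rw [real_msub f GS _ _ _ hGar, sub_env3]
      · exact hur f
      · intro y hy v hv
        have := hGbv y hy
        rcases v with _ | _ | _ | v <;> simp [PTerm.fv] <;> omega
    · convert hvr using 2
      funext j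
      fin_cases j <;> simp [PTerm.eval, Function.update]

end CpcAux

/-- the scheme `nCT` is absolutely realizable. -/
theorem nCT_absolutely_realizable (GS : Cpc.Scheme)
    (hGfv : GS.fv ⊆ {0, 1, 2}) (hGbv : ∀ v ∈ GS.bv, 10 ≤ v)
    (hGsig : Cpc.IsSigmaS GS) (hGar : GS.pvars = ∅)
    (hGdef : ∀ ρ : ℕ → ℕ, Cpc.STrue ρ GS ↔ Cpc.K (ρ 0) (ρ 1) = Part.some (ρ 2)) :
    ∃ e, ∀ f : Cpc.Interp, Cpc.SReal f Cpc.rho0 e (Cpc.nCTscheme GS) := by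
  exact CpcAux.main GS hGbv hGsig hGar hGdef
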